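/- arXiv:math/0405052 — 6 statements merged into one kernel-verified Lean document; each statement's English description precedes it below -/
import Mathlib

section
/- Let H ≤ G be a subgroup such that char(F) does not divide the index [G:H]. If the invariant ring S[V]^H is Cohen-Macaulay, then S[V]^G is Cohen-Macaulay as well. -/
set_option synthInstance.maxHeartbeats 1000000
set_option maxHeartbeats 1000000

open MvPolynomial

/-- The algebra endomorphism of the polynomial ring `S[V] = F[X₁,…,Xₙ]` induced by a matrix
acting (on the right) on the coefficient row vectors of linear forms: the variable `Xᵢ`
(the `i`-th basis vector of `V`) is sent to the linear form given by the `i`-th row of `M`. -/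
noncomputable def matSub {F : Type*} [CommRing F] {n : ℕ} (M : Matrix (Fin n) (Fin n) F) :
    MvPolynomial (Fin n) F →ₐ[F] MvPolynomial (Fin n) F :=
  aeval (fun i => ∑ j, M i j • X j)

/-- The invariant ring `S[V]^G` of a matrix representation `ρ` of `G` on `V = Fⁿ`
(a right `FG`-module via `v ↦ v · ρ σ` on row vectors). -/
noncomputable def invariants {F : Type*} [CommRing F] {n : ℕ} {G : Type*} [Group G]
    (ρ : G →* GL (Fin n) F) : Subalgebra F (MvPolynomial (Fin n) F) where
  carrier := {p | ∀ σ : G, matSub ((ρ σ : Matrix (Fin n) (Fin n) F)) p = p}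
  mul_mem' := fun ha hb σ => by rw [map_mul, ha σ, hb σ]
  add_mem' := fun ha hb σ => by rw [map_add, ha σ, hb σ]
  one_mem' := fun σ => map_one _
  zero_mem' := fun σ => map_zero _
  algebraMap_mem' := fun r σ => AlgHom.commutes _ r

/-- A homogeneous system of parameters (a set of primary invariants) of an invariant ring
`R ⊆ S[V]`, `V` of dimension `n`: a family of `n = dim_F V` algebraically independent
homogeneous elements of positive degree over whose generated polynomial subalgebra `R` is a
finitely generated module. -/
def IsHSOP {F : Type*} [Field F] {n : ℕ} (R : Subalgebra F (MvPolynomial (Fin n) F))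
    (f : Fin n → R) : Prop :=
  AlgebraicIndependent F f ∧
  (∀ i, ∃ d : ℕ, 0 < d ∧ (f i : MvPolynomial (Fin n) F).IsHomogeneous d) ∧
  Module.Finite (Algebra.adjoin F (Set.range f)) R

/-- `R` is Cohen-Macaulay: `R` is a free module over the subalgebra generated by some
homogeneous system of parameters. -/
def IsCM {F : Type*} [Field F] {n : ℕ} (R : Subalgebra F (MvPolynomial (Fin n) F)) : Prop :=
  ∃ f : Fin n → R, IsHSOP R f ∧ Module.Free (Algebra.adjoin F (Set.range f)) R

open RingTheory.Sequence

open scoped Pointwise in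
theorem aux_indep {F A : Type*} [Field F] [CommRing A] [Algebra F A] {ι : Type*} [Fintype ι] (k : ℕ) :
    ∀ (g : Fin k → A) (M : Type _) [AddCommGroup M] [Module A M] [Module F M]
      [IsScalarTower F A M] (_ : IsWeaklyRegular M (List.ofFn g)) (b : ι → M)
      (_ : ∀ c : ι → F, ∑ i, c i • b i ∈ (Ideal.ofList (List.ofFn g) • ⊤ : Submodule A M) → c = 0)
      (p : ι → MvPolynomial (Fin k) F), ∑ i, aeval g (p i) • b i = 0 → p = 0 := by
  induction k with
  | zero =>
    intro g M _ _ _ _ _ b hb p hp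
    have key : ∀ i, p i = C (coeff 0 (p i)) := fun i => eq_C_of_isEmpty _
    have h0 : (fun i => coeff 0 (p i)) = 0 := by
      apply hb
      have : ∑ i, coeff 0 (p i) • b i = 0 := by
        rw [← hp]
        refine Finset.sum_congr rfl fun i _ => ?_
        conv_rhs => rw [key i]
        simp
      rw [this]; exact zero_mem _
    funext i
    rw [key i, congrFun h0 i]; simp
  | succ k ih =>
    intro g M _ _ _ _ hreg b hb p hp
    rw [List.ofFn_succ, isWeaklyRegular_cons_iff] at hreg
    obtain ⟨h1, h2⟩ := hreg
    set g' : Fin k → A := fun i => g i.succ with hg'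
    let φ : MvPolynomial (Fin k) F →+* A := (aeval g' : MvPolynomial (Fin k) F →ₐ[F] A).toRingHom
    have hev : ∀ q : MvPolynomial (Fin (k+1)) F, aeval g q = Polynomial.eval₂ φ (g 0) (finSuccEquiv F k q) := by
      intro q
      induction q using MvPolynomial.induction_on with
      | C a => simp [φ, finSuccEquiv_apply]
      | add p q hp hq => simp [hp, hq, Polynomial.eval₂_add]
      | mul_X p i hp =>
        rw [map_mul, map_mul, hp, Polynomial.eval₂_mul]
        congr 1
        refine Fin.cases ?_ (fun j => ?_) i
        · simp [finSuccEquiv_X_zero]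
        · simp [finSuccEquiv_X_succ, φ, g']
    have main : ∀ N : ℕ, ∀ q : ι → Polynomial (MvPolynomial (Fin k) F), (∀ i, (q i).natDegree ≤ N) →
        ∑ i, Polynomial.eval₂ φ (g 0) (q i) • b i = 0 → q = 0 := by
      have step : ∀ q : ι → Polynomial (MvPolynomial (Fin k) F),
          ∑ i, Polynomial.eval₂ φ (g 0) (q i) • b i = 0 →
          (∀ i, (q i).coeff 0 = 0) ∧ ∑ i, Polynomial.eval₂ φ (g 0) (q i).divX • b i = 0 := by
        intro q hq
        have e1 : ∀ i, Polynomial.eval₂ φ (g 0) (q i) • b i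
            = g 0 • (Polynomial.eval₂ φ (g 0) (q i).divX • b i) + aeval g' ((q i).coeff 0) • b i := by
          intro i
          conv_lhs => rw [← Polynomial.divX_mul_X_add (q i)]
          rw [Polynomial.eval₂_add, Polynomial.eval₂_mul, Polynomial.eval₂_X, Polynomial.eval₂_C,
            add_smul, mul_comm, mul_smul]
          rfl
        rw [Finset.sum_congr rfl (fun i _ => e1 i), Finset.sum_add_distrib, ← Finset.smul_sum] at hq
        have c0 : (fun i => (q i).coeff 0) = 0 := by
          refine ih g' (QuotSMulTop (g 0) M) h2 (fun i => Submodule.Quotient.mk (b i)) ?_ _ ?_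
          · intro c hc
            apply hb
            have hc' : (Submodule.Quotient.mk (∑ i, c i • b i) : QuotSMulTop (g 0) M) ∈
                (Ideal.ofList (List.ofFn g') • ⊤ : Submodule A (QuotSMulTop (g 0) M)) := by
              convert hc using 1
              rw [← Submodule.mkQ_apply, map_sum]
              refine Finset.sum_congr rfl fun i _ => ?_
              rw [← algebraMap_smul A (c i) (b i), map_smul, algebraMap_smul]; rfl
            have hmap : (Ideal.ofList (List.ofFn g') • ⊤ : Submodule A (QuotSMulTop (g 0) M))
                = Submodule.map (Submodule.mkQ (g 0 • ⊤ : Submodule A M)) (Ideal.ofList (List.ofFn g') • ⊤) := by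
              rw [Submodule.map_smul'', Submodule.map_top, Submodule.range_mkQ]
            rw [hmap] at hc'
            obtain ⟨y, hy, hy2⟩ := hc'
            rw [Submodule.mkQ_apply, Submodule.Quotient.eq] at hy2
            rw [List.ofFn_succ, Ideal.ofList_cons, Submodule.sup_smul]
            have : ∑ i, c i • b i = (∑ i, c i • b i - y) + y := by abel
            rw [this]
            refine Submodule.add_mem_sup ?_ hy
            rw [Submodule.ideal_span_singleton_smul, ← neg_sub]
            exact neg_mem hy2
          · have := congrArg (Submodule.mkQ (g 0 • ⊤ : Submodule A M)) hq
            rw [map_add, map_zero, map_sum] at this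
            have z : (Submodule.mkQ (g 0 • ⊤ : Submodule A M)) (g 0 • ∑ i, Polynomial.eval₂ φ (g 0) (q i).divX • b i) = 0 := by
              rw [Submodule.mkQ_apply, Submodule.Quotient.mk_eq_zero]
              exact Submodule.smul_mem_pointwise_smul _ _ _ Submodule.mem_top
            rw [z, zero_add] at this
            exact this
        have c0' : ∀ i, (q i).coeff 0 = 0 := fun i => congrFun c0 i
        refine ⟨c0', ?_⟩
        simp only [c0', map_zero, zero_smul, Finset.sum_const_zero, add_zero] at hq
        exact h1 (by simpa using hq)
      intro N
      induction N with
      | zero =>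
        intro q hN hq
        funext i
        rw [Polynomial.eq_C_of_natDegree_le_zero (hN i), (step q hq).1 i]; simp
      | succ N ihN =>
        intro q hN hq
        obtain ⟨s1, s2⟩ := step q hq
        have := ihN (fun i => (q i).divX) (fun i => by
          rw [Polynomial.natDegree_divX_eq_natDegree_tsub_one]; have := hN i; omega) s2
        funext i
        rw [← Polynomial.divX_mul_X_add (q i), s1 i, congrFun this i]; simp
    have := main (Finset.univ.sup fun i => (finSuccEquiv F k (p i)).natDegree)
      (fun i => finSuccEquiv F k (p i)) (fun i => Finset.le_sup (f := fun i => (finSuccEquiv F k (p i)).natDegree) (Finset.mem_univ i)) (by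
        rw [← hp]; exact Finset.sum_congr rfl fun i _ => by rw [hev])
    funext i
    have h := congrFun this i
    simpa using h

theorem aux_X {F : Type*} [Field F] (n : ℕ) :
    IsWeaklyRegular (MvPolynomial (Fin n) F) (List.ofFn (X : Fin n → MvPolynomial (Fin n) F)) := by
  rw [isWeaklyRegular_iff]
  intro i hi
  have hi' : i < n := by simpa using hi
  have hI : (Ideal.ofList (List.take i (List.ofFn (X : Fin n → MvPolynomial (Fin n) F))) • ⊤ : Submodule (MvPolynomial (Fin n) F) (MvPolynomial (Fin n) F))
      = Ideal.span ((X : Fin n → MvPolynomial (Fin n) F) '' {j | (j : ℕ) < i}) := by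
    rw [smul_eq_mul, Ideal.mul_top]
    unfold Ideal.ofList
    congr 1
    ext x
    simp only [List.mem_take_iff_getElem, Set.mem_ofPred_eq, Set.mem_image, List.getElem_ofFn]
    constructor
    · rintro ⟨j, hj, rfl⟩
      simp at hj
      exact ⟨⟨j, by omega⟩, by simp; omega, rfl⟩
    · rintro ⟨j, hj, rfl⟩
      exact ⟨j, by simp; omega, rfl⟩
  rw [hI]
  rw [isSMulRegular_iff_right_eq_zero_of_smul]
  intro x hx
  obtain ⟨x, rfl⟩ := Submodule.Quotient.mk_surjective _ x
  rw [← Submodule.Quotient.mk_smul, Submodule.Quotient.mk_eq_zero] at hx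
  rw [Submodule.Quotient.mk_eq_zero]
  rw [mem_ideal_span_X_image] at hx ⊢
  intro m hm
  rw [List.getElem_ofFn, smul_eq_mul] at hx
  obtain ⟨j, hj, hj2⟩ := hx (Finsupp.single ⟨i, hi'⟩ 1 + m) (by
    rw [mem_support_iff, coeff_X_mul]; simpa using hm)
  refine ⟨j, hj, ?_⟩
  have : (⟨i, hi'⟩ : Fin n) ≠ j := by rintro rfl; simp at hj
  simpa [Finsupp.single_apply, this] using hj2

theorem aux_free_reg {F R : Type*} [Field F] [CommRing R] [Algebra F R] {n : ℕ} (f : Fin n → R)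
    (hf : AlgebraicIndependent F f) (hfree : Module.Free (Algebra.adjoin F (Set.range f)) R) :
    IsWeaklyRegular R (List.ofFn f) := by
  let φ : MvPolynomial (Fin n) F →+* R := (aeval f : MvPolynomial (Fin n) F →ₐ[F] R).toRingHom
  have h1 : (algebraMap (Algebra.adjoin F (Set.range f)) R).Flat := by
    rw [RingHom.flat_algebraMap_iff]; infer_instance
  have h2 : (hf.aevalEquiv.toRingEquiv.toRingHom).Flat := RingHom.Flat.of_bijective hf.aevalEquiv.bijective
  have h3 : φ.Flat := by
    have : φ = (algebraMap (Algebra.adjoin F (Set.range f)) R).comp (hf.aevalEquiv.toRingEquiv.toRingHom) := by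
      ext x
      · simp [φ]
      · simp [φ]
    rw [this]
    exact h2.comp h1
  let _ := φ.toAlgebra
  have : Module.Flat (MvPolynomial (Fin n) F) R := h3
  have := (aux_X (F := F) n).of_flat (S := R)
  rw [List.map_ofFn] at this
  convert this using 2
  funext i
  change f i = φ (X i)
  simp [φ]

structure GrData (F : Type*) {R : Type*} [Field F] [CommRing R] [Algebra F R]
    (𝒜 : ℕ → Submodule F R) (π : ℕ → R →ₗ[F] R) : Prop where
  one_mem : 1 ∈ 𝒜 0
  mul_mem : ∀ {i j a b}, a ∈ 𝒜 i → b ∈ 𝒜 j → a * b ∈ 𝒜 (i + j)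
  pi_mem : ∀ d x, π d x ∈ 𝒜 d
  pi_mul : ∀ {e a} (d x), a ∈ 𝒜 e → π (e + d) (a * x) = a * π d x
  pi_mul_lt : ∀ {e a d} (x), a ∈ 𝒜 e → d < e → π d (a * x) = 0
  pi_self : ∀ {d x}, x ∈ 𝒜 d → π d x = x
  pi_ne : ∀ {d e x}, x ∈ 𝒜 e → d ≠ e → π d x = 0
  exists_sum : ∀ x, ∃ N, (∀ d, N ≤ d → π d x = 0) ∧ x = ∑ d ∈ Finset.range N, π d x

section
variable {F R : Type*} [Field F] [CommRing R] [Algebra F R]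
    {𝒜 : ℕ → Submodule F R} {π : ℕ → R →ₗ[F] R}

theorem GrData.pow_mem (h : GrData F 𝒜 π) {e : ℕ} {a : R} (ha : a ∈ 𝒜 e) (k : ℕ) :
    a ^ k ∈ 𝒜 (k * e) := by
  induction k with
  | zero => simpa using h.one_mem
  | succ k ih => rw [pow_succ, Nat.succ_mul]; exact h.mul_mem ih ha

theorem GrData.prod_mem (h : GrData F 𝒜 π) {ι : Type*} (s : Finset ι) (b : ι → R) (d : ι → ℕ)
    (hb : ∀ i ∈ s, b i ∈ 𝒜 (d i)) : ∏ i ∈ s, b i ∈ 𝒜 (∑ i ∈ s, d i) := by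
  classical
  induction s using Finset.induction_on with
  | empty => simpa using h.one_mem
  | insert a s ha ih =>
    rw [Finset.prod_insert ha, Finset.sum_insert ha]
    exact h.mul_mem (hb a (by simp)) (ih fun i hi => hb i (by simp [hi]))

theorem GrData.span_hom (h : GrData F 𝒜 π) {s : Set R} (hs : ∀ a ∈ s, ∃ e, a ∈ 𝒜 e) {x : R}
    (hx : x ∈ Ideal.span s) (d : ℕ) : π d x ∈ Ideal.span s := by
  induction hx using Submodule.span_induction generalizing d with
  | mem x hx =>
    obtain ⟨e, he⟩ := hs x hx
    rcases lt_or_ge d e with hlt | hge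
    · rw [← mul_one x, h.pi_mul_lt 1 he hlt]; exact zero_mem _
    · obtain ⟨k, rfl⟩ := Nat.exists_eq_add_of_le hge
      rw [← mul_one x, h.pi_mul k 1 he]
      exact Ideal.mul_mem_right _ _ (Ideal.subset_span hx)
  | zero => simp
  | add x y _ _ ihx ihy => rw [map_add]; exact add_mem (ihx d) (ihy d)
  | smul r x _ ih =>
    obtain ⟨N, -, hN⟩ := h.exists_sum r
    rw [smul_eq_mul, hN, Finset.sum_mul, map_sum]
    refine sum_mem fun e _ => ?_
    rcases lt_or_ge d e with hlt | hge
    · rw [h.pi_mul_lt x (h.pi_mem e r) hlt]; exact zero_mem _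
    · obtain ⟨k, rfl⟩ := Nat.exists_eq_add_of_le hge
      rw [h.pi_mul k x (h.pi_mem e r)]
      exact Ideal.mul_mem_left _ _ (ih k)

/-- graded prime avoidance -/
theorem GrData.avoid (h : GrData F 𝒜 π) (m : ℕ) : ∀ s : Finset (Ideal R), s.card = m →
    (∀ P ∈ s, P.IsPrime) → (∀ P ∈ s, ∃ d, 0 < d ∧ ∃ t ∈ 𝒜 d, t ∉ P) →
    ∃ d, 0 < d ∧ ∃ t ∈ 𝒜 d, ∀ P ∈ s, t ∉ P := by
  classical
  induction m with
  | zero =>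
    intro s hs _ _
    rw [Finset.card_eq_zero] at hs
    subst hs
    exact ⟨1, one_pos, 0, zero_mem _, by simp⟩
  | succ m ih =>
    intro s hs hprime hav
    by_cases hc : ∃ P ∈ s, ∃ Q ∈ s, Q ≠ P ∧ ∀ d, ∀ t ∈ 𝒜 d, t ∈ Q → t ∈ P
    · obtain ⟨P, hP, Q, hQ, hne, hQP⟩ := hc
      obtain ⟨d, hd, t, ht, hts⟩ := ih (s.erase Q) (by rw [Finset.card_erase_of_mem hQ, hs]; rfl)
        (fun P hP => hprime P (Finset.mem_of_mem_erase hP))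
        (fun P hP => hav P (Finset.mem_of_mem_erase hP))
      refine ⟨d, hd, t, ht, fun P' hP' => ?_⟩
      by_cases e : P' = Q
      · subst e
        exact fun hh => hts P (Finset.mem_erase.2 ⟨hne.symm, hP⟩) (hQP d t ht hh)
      · exact hts P' (Finset.mem_erase.2 ⟨e, hP'⟩)
    · push Not at hc
      have hh : ∀ P, ∃ D, ∃ u, P ∈ s → 0 < D ∧ u ∈ 𝒜 D ∧ u ∉ P ∧ ∀ Q ∈ s, Q ≠ P → u ∈ Q := by
        intro P
        by_cases hP : P ∈ s
        swap
        · exact ⟨0, 0, fun h => absurd h hP⟩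
        obtain ⟨d, hd, a, ha, haP⟩ := hav P hP
        have hb : ∀ Q, ∃ d, ∃ t, Q ∈ s.erase P → t ∈ 𝒜 d ∧ t ∈ Q ∧ t ∉ P := by
          intro Q
          by_cases hQ : Q ∈ s.erase P
          · rw [Finset.mem_erase] at hQ
            obtain ⟨d, t, h1, h2, h3⟩ := hc P hP Q hQ.2 hQ.1
            exact ⟨d, t, fun _ => ⟨h1, h2, h3⟩⟩
          · exact ⟨0, 0, fun h => absurd h hQ⟩
        choose e b hb using hb
        refine ⟨d + ∑ Q ∈ s.erase P, e Q, a * ∏ Q ∈ s.erase P, b Q, fun _ => ⟨by omega,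
          h.mul_mem ha (h.prod_mem _ _ _ fun Q hQ => (hb Q hQ).1), ?_, ?_⟩⟩
        · have := hprime P hP
          intro hm
          rcases this.mem_or_mem hm with h1 | h1
          · exact haP h1
          · rw [this.prod_mem_iff] at h1
            obtain ⟨Q, hQ, h2⟩ := h1
            exact (hb Q hQ).2.2 h2
        · intro Q hQ hne
          have hQ' : Q ∈ s.erase P := Finset.mem_erase.2 ⟨hne, hQ⟩
          rw [← Finset.mul_prod_erase _ _ hQ']
          exact Ideal.mul_mem_left _ _ (Ideal.mul_mem_right _ _ (hb Q hQ').2.1)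
      choose D u hu using hh
      refine ⟨∏ P ∈ s, D P, Finset.prod_pos fun P hP => (hu P hP).1,
        ∑ P ∈ s, u P ^ (∏ Q ∈ s.erase P, D Q), ?_, ?_⟩
      · refine sum_mem fun P hP => ?_
        rw [← Finset.prod_erase_mul _ _ hP]
        exact h.pow_mem (hu P hP).2.1 _
      · intro P hP hm
        rw [← Finset.add_sum_erase _ _ hP] at hm
        have h2 : ∑ x ∈ s.erase P, u x ^ (∏ Q ∈ s.erase x, D Q) ∈ P := by
          refine sum_mem fun Q hQ => ?_
          rw [Finset.mem_erase] at hQ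
          refine Ideal.pow_mem_of_mem _ ((hu Q hQ.2).2.2.2 P hP hQ.1.symm) _ ?_
          exact Finset.prod_pos fun Q' hQ' => (hu Q' (Finset.mem_of_mem_erase hQ')).1
        have h3 := (Ideal.add_mem_iff_left _ h2).1 hm
        exact (hu P hP).2.2.1 ((hprime P hP).mem_of_pow_mem _ h3)

theorem GrData.perm (h : GrData F 𝒜 π) {rs rs' : List R} (hrs : ∀ r ∈ rs, ∃ d, 0 < d ∧ r ∈ 𝒜 d)
    (hreg : IsWeaklyRegular R rs) (hp : rs.Perm rs') : IsWeaklyRegular R rs' := by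
  refine hreg.prototype_perm hp ?_
  intro a b ts hsub K hK
  have hmem : ∀ r ∈ a :: b :: ts, ∃ d, 0 < d ∧ r ∈ 𝒜 d := fun r hr => hrs r (hsub.subset hr)
  obtain ⟨e, he, hae⟩ := hmem a (by simp)
  rw [eq_bot_iff]
  intro x hx
  have hpow : ∀ k : ℕ, ∀ x ∈ K, ∃ y, x = a ^ k • y := by
    intro k
    induction k with
    | zero => exact fun x _ => ⟨x, by simp⟩
    | succ k ih =>
      intro x hx
      rw [hK] at hx
      obtain ⟨z, hz, rfl⟩ := hx
      obtain ⟨y, rfl⟩ := ih z hz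
      exact ⟨y, by rw [pow_succ', mul_smul]; rfl⟩
  rw [Submodule.mem_bot]
  obtain ⟨x, rfl⟩ := Submodule.Quotient.mk_surjective _ x
  have hI : (Ideal.ofList ts • ⊤ : Submodule R R) = Ideal.span {r | r ∈ ts} := by
    rw [smul_eq_mul, Ideal.mul_top]
  rw [Submodule.Quotient.mk_eq_zero, hI]
  obtain ⟨N, -, hN⟩ := h.exists_sum x
  obtain ⟨y, hy⟩ := hpow N _ hx
  obtain ⟨y, rfl⟩ := Submodule.Quotient.mk_surjective _ y
  rw [← Submodule.Quotient.mk_smul, Submodule.Quotient.eq, hI] at hy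
  rw [hN]
  refine sum_mem fun d hd => ?_
  have h1 := h.span_hom (fun r hr => by
    obtain ⟨d, -, hd⟩ := hmem r (by simp only [List.mem_cons]; exact Or.inr (Or.inr hr))
    exact ⟨d, hd⟩) hy d
  rw [map_sub, smul_eq_mul, h.pi_mul_lt y (h.pow_mem hae N), sub_zero] at h1
  · exact h1
  · rw [Finset.mem_range] at hd
    exact lt_of_lt_of_le hd (Nat.le_mul_of_pos_right _ he)

variable {T : Type*} [CommRing T] [Algebra F T] [Algebra T R] [Algebra.IsIntegral T R]
    {ℬ : ℕ → Submodule F T} {ϖ : ℕ → T →ₗ[F] T}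

theorem GrData.exists_notMem (h : GrData F 𝒜 π) (h' : GrData F ℬ ϖ)
    (hc : ∀ d t, π d (algebraMap T R t) = algebraMap T R (ϖ d t)) (P : Ideal R) (hP : P.IsPrime)
    {e : ℕ} (he : 0 < e) {f : R} (hf : f ∈ 𝒜 e) (hfP : f ∉ P) :
    ∃ d, 0 < d ∧ ∃ t ∈ ℬ d, t ∉ P.comap (algebraMap T R) := by
  by_contra! hcon
  obtain ⟨p, hp, hp0⟩ := Algebra.IsIntegral.isIntegral (R := T) f
  rw [Polynomial.eval₂_eq_sum_range, Finset.sum_range_succ, hp.coeff_natDegree, map_one, one_mul] at hp0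
  have h1 := congrArg (π (p.natDegree * e)) hp0
  rw [map_add, map_zero, h.pi_self (h.pow_mem hf _), map_sum] at h1
  apply hfP
  refine hP.mem_of_pow_mem p.natDegree ?_
  rw [eq_neg_of_add_eq_zero_right h1]
  refine neg_mem (sum_mem fun i hi => ?_)
  rw [Finset.mem_range] at hi
  have hh : p.natDegree * e = i * e + (p.natDegree - i) * e := by
    rw [← add_mul]; congr 1; omega
  rw [hh, mul_comm (algebraMap T R _), h.pi_mul _ _ (h.pow_mem hf i), hc]
  refine Ideal.mul_mem_left _ _ ?_
  exact hcon ((p.natDegree - i) * e) (Nat.mul_pos (by omega) he) _ (h'.pi_mem _ _)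

theorem GrData.exchange [IsNoetherianRing R] (h : GrData F 𝒜 π) (h' : GrData F ℬ ϖ)
    (hc : ∀ d t, π d (algebraMap T R t) = algebraMap T R (ϖ d t))
    (hB : ∀ d t, t ∈ ℬ d → algebraMap T R t ∈ 𝒜 d) (fs : List R) : ∀ (gs : List T),
    (∀ r ∈ fs, ∃ d, 0 < d ∧ r ∈ 𝒜 d) → (∀ r ∈ gs, ∃ d, 0 < d ∧ r ∈ ℬ d) →
    IsWeaklyRegular R (gs.map (algebraMap T R) ++ fs) →
    ∃ gs' : List T, gs'.length = gs.length + fs.length ∧ (∀ r ∈ gs', ∃ d, 0 < d ∧ r ∈ ℬ d) ∧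
      IsWeaklyRegular R (gs'.map (algebraMap T R)) := by
  induction fs with
  | nil =>
    intro gs _ hg hr
    exact ⟨gs, rfl, hg, by simpa using hr⟩
  | cons f fs ih =>
    intro gs hf hg hr
    have hgm : ∀ r ∈ gs.map (algebraMap T R), ∃ d, 0 < d ∧ r ∈ 𝒜 d := by
      intro r hr
      obtain ⟨t, ht, rfl⟩ := List.mem_map.1 hr
      obtain ⟨d, hd, hd2⟩ := hg t ht
      exact ⟨d, hd, hB d t hd2⟩
    have hall : ∀ r ∈ gs.map (algebraMap T R) ++ f :: fs, ∃ d, 0 < d ∧ r ∈ 𝒜 d := by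
      intro r hr
      rcases List.mem_append.1 hr with hr | hr
      · exact hgm r hr
      · exact hf r hr
    have hr2 : IsWeaklyRegular R ((gs.map (algebraMap T R) ++ fs) ++ [f]) :=
      h.perm hall hr (by
        rw [List.append_assoc]
        exact List.Perm.append_left _ (List.perm_append_singleton f fs).symm)
    rw [isWeaklyRegular_append_iff, isWeaklyRegular_singleton_iff] at hr2
    set L := gs.map (algebraMap T R) ++ fs with hL
    let M := R ⧸ (Ideal.ofList L • ⊤ : Submodule R R)
    obtain ⟨hr3, hr4⟩ := hr2
    have hfin : (associatedPrimes R M).Finite := associatedPrimes.finite R M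
    have hU := biUnion_associatedPrimes_eq_zero_divisors R M
    obtain ⟨e, he, hfe⟩ := hf f (by simp)
    have hfP : ∀ P ∈ associatedPrimes R M, f ∉ P := by
      intro P hP hfP
      have : f ∈ ⋃ p ∈ associatedPrimes R M, (p : Set R) := Set.mem_biUnion hP hfP
      rw [hU] at this
      obtain ⟨x, hx, hx2⟩ := this
      exact hx (isSMulRegular_iff_right_eq_zero_of_smul.1 hr4 x hx2)
    classical
    obtain ⟨d, hd, g, hgd, hgP⟩ := h'.avoid _ (hfin.toFinset.image (Ideal.comap (algebraMap T R))) rfl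
      (by
        intro P hP
        obtain ⟨P, hP2, rfl⟩ := Finset.mem_image.1 hP
        clear hP
        rename' hP2 => hP
        rw [Set.Finite.mem_toFinset] at hP
        have : P.IsPrime := hP.1
        infer_instance)
      (by
        intro P hP
        obtain ⟨P, hP2, rfl⟩ := Finset.mem_image.1 hP
        clear hP
        rename' hP2 => hP
        rw [Set.Finite.mem_toFinset] at hP
        exact h.exists_notMem h' hc P hP.1 he hfe (hfP P hP))
    have hg5 : IsSMulRegular M (algebraMap T R g) := by
      rw [isSMulRegular_iff_right_eq_zero_of_smul]
      intro x hx
      by_contra hne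
      have : algebraMap T R g ∈ {r : R | ∃ x : M, x ≠ 0 ∧ r • x = 0} := ⟨x, hne, hx⟩
      rw [← hU] at this
      obtain ⟨P, hP, hP2⟩ := Set.mem_iUnion₂.1 this
      exact hgP (P.comap (algebraMap T R))
        (Finset.mem_image_of_mem _ ((Set.Finite.mem_toFinset _).2 hP)) hP2
    have hr6 : IsWeaklyRegular R (L ++ [algebraMap T R g]) := by
      rw [isWeaklyRegular_append_iff, isWeaklyRegular_singleton_iff]
      exact ⟨hr3, hg5⟩
    obtain ⟨gs', h1, h2, h3⟩ := ih (g :: gs) (fun r hr => hf r (by simp [hr]))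
      (by
        intro r hr
        rcases List.mem_cons.1 hr with rfl | hr
        · exact ⟨d, hd, hgd⟩
        · exact hg r hr)
      (h.perm (rs := L ++ [algebraMap T R g]) (by
          intro r hr
          rcases List.mem_append.1 hr with hr | hr
          · apply hall r
            rw [hL] at hr
            simp only [List.mem_append, List.mem_cons] at hr ⊢
            tauto
          · rw [List.mem_singleton] at hr
            subst hr
            exact ⟨d, hd, hB d g hgd⟩) hr6
        (by
          rw [List.map_cons, List.cons_append]
          exact List.perm_append_singleton _ _))
    refine ⟨gs', ?_, h2, h3⟩
    rw [h1]; simp; omega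

end

theorem aux_ofList {R : Type*} [CommRing R] {n : ℕ} (g : Fin n → R) :
    Ideal.ofList (List.ofFn g) = Ideal.span (Set.range g) := by
  unfold Ideal.ofList
  congr 1
  ext x
  simp [List.mem_ofFn]

theorem GrData.free {F R : Type*} [Field F] [CommRing R] [Algebra F R] [Nontrivial R]
    {𝒜 : ℕ → Submodule F R} {π : ℕ → R →ₗ[F] R} (h : GrData F 𝒜 π) {n : ℕ} (g : Fin n → R)
    (hg : ∀ i, ∃ d, 0 < d ∧ g i ∈ 𝒜 d) (hreg : IsWeaklyRegular R (List.ofFn g))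
    (hfin : Module.Finite F (R ⧸ Ideal.span (Set.range g))) :
    AlgebraicIndependent F g ∧ Module.Finite (Algebra.adjoin F (Set.range g)) R ∧
      Module.Free (Algebra.adjoin F (Set.range g)) R := by
  classical
  set I := Ideal.span (Set.range g) with hI
  let q : R →ₗ[F] (R ⧸ I) := (Ideal.Quotient.mkₐ F I).toLinearMap
  have hq0 : ∀ x, q x = 0 ↔ x ∈ I := fun x => Ideal.Quotient.eq_zero_iff_mem
  have hqs : Function.Surjective q := Ideal.Quotient.mk_surjective
  obtain ⟨b, hbV, hbs, hbi⟩ := exists_linearIndependent F {y : R ⧸ I | ∃ d, ∃ x ∈ 𝒜 d, q x = y}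
  have hbtop : Submodule.span F b = ⊤ := by
    rw [hbs, eq_top_iff]
    rintro y -
    obtain ⟨x, rfl⟩ := hqs y
    obtain ⟨N, -, hN⟩ := h.exists_sum x
    rw [hN, map_sum]
    exact sum_mem fun d _ => Submodule.subset_span ⟨d, _, h.pi_mem d x, rfl⟩
  have hbf : b.Finite := hbi.setFinite
  have : Fintype b := hbf.fintype
  have hlift : ∀ y : b, ∃ d, ∃ x ∈ 𝒜 d, q x = y := fun y => hbV y.2
  choose e B hB hqB using hlift
  have hone : (1 : R) ∉ I := by
    intro h1
    rw [hI, Ideal.mem_span_range_iff_exists_fun] at h1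
    obtain ⟨c, hc⟩ := h1
    have h2 := congrArg (π 0) hc
    rw [h.pi_self h.one_mem, map_sum] at h2
    refine one_ne_zero (h2.symm.trans (Finset.sum_eq_zero fun i _ => ?_))
    obtain ⟨d, hd, hgd⟩ := hg i
    rw [mul_comm]
    exact h.pi_mul_lt _ hgd hd
  have hne : Nonempty b := by
    by_contra hcon
    rw [not_nonempty_iff, Set.isEmpty_coe_sort] at hcon
    rw [hcon, Submodule.span_empty] at hbtop
    have : q 1 ∈ (⊥ : Submodule F (R ⧸ I)) := by rw [hbtop]; trivial
    exact hone ((hq0 1).1 ((Submodule.mem_bot F).1 this))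
  have hind := aux_indep (F := F) n g R hreg B (by
    intro c hc
    rw [aux_ofList, smul_eq_mul, Ideal.mul_top, ← hI, ← hq0, map_sum] at hc
    simp only [map_smul, hqB] at hc
    funext i
    exact Fintype.linearIndependent_iff.1 hbi c hc i)
  have halg : AlgebraicIndependent F g := by
    rw [algebraicIndependent_iff]
    intro p hp
    have := hind (fun _ => p) (by simp [hp])
    exact congrFun this hne.some
  have hspan : ∀ d, ∀ x ∈ 𝒜 d, x ∈ Submodule.span (Algebra.adjoin F (Set.range g)) (Set.range B) := by
    intro d
    induction d using Nat.strong_induction_on with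
    | _ d ih =>
      intro x hx
      have h1 : q x ∈ Submodule.span F (Set.range (fun y : b => (y : R ⧸ I))) := by
        rw [Subtype.range_coe, hbtop]; trivial
      rw [Submodule.mem_span_range_iff_exists_fun] at h1
      obtain ⟨c, hc⟩ := h1
      have h2 : x - ∑ i, c i • B i ∈ I := by
        rw [← hq0, map_sub, map_sum, ← hc]
        simp [hqB]
      obtain ⟨y, hy⟩ := Ideal.mem_span_range_iff_exists_fun.1 h2
      have h3 := congrArg (π d) (eq_add_of_sub_eq hy.symm)
      rw [h.pi_self hx, map_add, map_sum, map_sum] at h3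
      rw [h3]
      refine add_mem (sum_mem fun i _ => ?_) (sum_mem fun i _ => ?_)
      · obtain ⟨k, hk, hgk⟩ := hg i
        rw [mul_comm]
        rcases lt_or_ge d k with hlt | hge
        · rw [h.pi_mul_lt _ hgk hlt]; exact zero_mem _
        · obtain ⟨m, rfl⟩ := Nat.exists_eq_add_of_le hge
          rw [h.pi_mul m _ hgk]
          exact Submodule.smul_mem _ (⟨g i, Algebra.subset_adjoin ⟨i, rfl⟩⟩ : Algebra.adjoin F (Set.range g))
            (ih m (by omega) _ (h.pi_mem _ _))
      · rw [map_smul]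
        have : π d (B i) ∈ Submodule.span (Algebra.adjoin F (Set.range g)) (Set.range B) := by
          by_cases hd : d = e i
          · rw [hd, h.pi_self (hB i)]; exact Submodule.subset_span ⟨i, rfl⟩
          · rw [h.pi_ne (hB i) hd]; exact zero_mem _
        rw [← algebraMap_smul (Algebra.adjoin F (Set.range g)) (c i)]
        exact Submodule.smul_mem _ _ this
  have htop : ⊤ ≤ Submodule.span (Algebra.adjoin F (Set.range g)) (Set.range B) := by
    rintro x -
    obtain ⟨N, -, hN⟩ := h.exists_sum x
    rw [hN]
    exact sum_mem fun d _ => hspan d _ (h.pi_mem d x)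
  have hli : LinearIndependent (Algebra.adjoin F (Set.range g)) B := by
    rw [Fintype.linearIndependent_iff]
    intro c hc
    have hp : ∀ i, ∃ p : MvPolynomial (Fin n) F, aeval g p = (c i : R) := by
      intro i
      have := (Algebra.adjoin_range_eq_range_aeval F g).le (c i).2
      exact this
    choose p hp using hp
    have h0 := hind p (by
      rw [← hc]
      exact Finset.sum_congr rfl fun i _ => by rw [hp]; rfl)
    intro i
    apply Subtype.ext
    rw [← hp, h0]; simp
  exact ⟨halg, Module.Finite.of_basis (Module.Basis.mk hli htop),
    Module.Free.of_basis (Module.Basis.mk hli htop)⟩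

theorem aux_dim {R : Type*} [CommRing R] (rs : List R) (h : IsWeaklyRegular R rs) :
    ringKrullDim (R ⧸ Ideal.ofList rs) + rs.length ≤ ringKrullDim R := by
  induction rs using List.reverseRecOn with
  | nil =>
    simp only [List.length_nil, Nat.cast_zero, add_zero]
    exact ringKrullDim_quotient_le _
  | append_singleton rs a ih =>
    rw [isWeaklyRegular_append_iff, isWeaklyRegular_singleton_iff] at h
    obtain ⟨h1, h2⟩ := h
    refine le_trans ?_ (ih h1)
    rw [List.length_append, List.length_singleton, Nat.cast_add, Nat.cast_one,
      add_comm (rs.length : WithBot ℕ∞), ← add_assoc]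
    gcongr
    have hle : Ideal.ofList rs ≤ Ideal.ofList (rs ++ [a]) := by
      rw [Ideal.ofList_append]; exact le_sup_left
    refine ringKrullDim_succ_le_of_surjective (Ideal.Quotient.factor hle)
      (Ideal.Quotient.factor_surjective hle) (r := Ideal.Quotient.mk _ a) ?_ ?_
    · rw [mem_nonZeroDivisors_iff_right]
      intro x hx
      obtain ⟨x, rfl⟩ := Ideal.Quotient.mk_surjective x
      rw [← map_mul, Ideal.Quotient.eq_zero_iff_mem] at hx
      rw [Ideal.Quotient.eq_zero_iff_mem]
      rw [isSMulRegular_iff_right_eq_zero_of_smul] at h2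
      have := h2 (Submodule.Quotient.mk x) (by
        rw [← Submodule.Quotient.mk_smul, Submodule.Quotient.mk_eq_zero, smul_eq_mul, Ideal.mul_top,
          smul_eq_mul, mul_comm]
        exact hx)
      rwa [Submodule.Quotient.mk_eq_zero, smul_eq_mul, Ideal.mul_top] at this
    · rw [Ideal.Quotient.factor_mk, Ideal.Quotient.eq_zero_iff_mem, Ideal.ofList_append]
      exact Ideal.mem_sup_right (Ideal.subset_span (by simp))

theorem aux_dim_integral {A R : Type*} [CommRing A] [CommRing R] [Algebra A R]
    [Algebra.IsIntegral A R] : ringKrullDim R ≤ ringKrullDim A := by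
  refine Order.krullDim_le_of_strictMono (PrimeSpectrum.comap (algebraMap A R)) ?_
  intro P Q hPQ
  exact Ideal.IsIntegral.comap_lt_comap (R := A) hPQ

theorem aux_finite {F R : Type*} [Field F] [CommRing R] [Algebra F R] {n : ℕ} (f : Fin n → R)
    (hf : AlgebraicIndependent F f) (hfin : Module.Finite (Algebra.adjoin F (Set.range f)) R)
    (rs : List R) (hrs : rs.length = n) (h : IsWeaklyRegular R rs) :
    IsNoetherianRing R ∧ Module.Finite F (R ⧸ Ideal.ofList rs) := by
  have hAft : Algebra.FiniteType F (Algebra.adjoin F (Set.range f)) :=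
    Algebra.FiniteType.equiv (inferInstance : Algebra.FiniteType F (MvPolynomial (Fin n) F)) hf.aevalEquiv
  have hft : Algebra.FiniteType F R := Algebra.FiniteType.trans hAft inferInstance
  have hN : IsNoetherianRing R := Algebra.FiniteType.isNoetherianRing F R
  refine ⟨hN, ?_⟩
  have hd : ringKrullDim R ≤ n := by
    refine (aux_dim_integral (A := Algebra.adjoin F (Set.range f))).trans ?_
    rw [← ringKrullDim_eq_of_ringEquiv hf.aevalEquiv.toRingEquiv,
      MvPolynomial.ringKrullDim_of_isNoetherianRing, ringKrullDim_eq_zero_of_field]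
    simp
  have h2 := (aux_dim rs h).trans hd
  rw [hrs] at h2
  rw [Module.finite_iff_krullDimLE_zero, Ring.krullDimLE_iff]
  generalize ringKrullDim (R ⧸ Ideal.ofList rs) = d at h2
  induction d using WithBot.recBotCoe with
  | bot => simp
  | coe x =>
    induction x using ENat.recTopCoe with
    | top =>
      exfalso
      have h3 : ((⊤ + (n : ℕ∞) : ℕ∞) : WithBot ℕ∞) ≤ ((n : ℕ∞) : WithBot ℕ∞) := h2
      rw [WithBot.coe_le_coe, top_add, top_le_iff] at h3
      exact ENat.coe_ne_top n h3
    | coe m =>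
      have h3 : (((m : ℕ∞) + (n : ℕ∞) : ℕ∞) : WithBot ℕ∞) ≤ ((n : ℕ∞) : WithBot ℕ∞) := h2
      rw [WithBot.coe_le_coe] at h3
      have h4 : m + n ≤ n := by exact_mod_cast h3
      have h5 : m = 0 := by omega
      subst h5
      simp

theorem aux_retract {T R : Type*} [CommRing T] [CommRing R] [Algebra T R] (r : R →ₗ[T] T)
    (hr : ∀ t, r (algebraMap T R t) = t) (gs : List T)
    (h : IsWeaklyRegular R (gs.map (algebraMap T R))) : IsWeaklyRegular T gs := by
  rw [isWeaklyRegular_map_algebraMap_iff, isWeaklyRegular_iff] at h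
  rw [isWeaklyRegular_iff]
  intro i hi
  have h1 := h i hi
  rw [isSMulRegular_iff_right_eq_zero_of_smul] at h1 ⊢
  intro x hx
  obtain ⟨x, rfl⟩ := Submodule.Quotient.mk_surjective _ x
  rw [← Submodule.Quotient.mk_smul, Submodule.Quotient.mk_eq_zero] at hx
  have hm : ∀ y ∈ (Ideal.ofList (gs.take i) • ⊤ : Submodule T T),
      algebraMap T R y ∈ (Ideal.ofList (gs.take i) • ⊤ : Submodule T R) := by
    intro y hy
    have : Submodule.map (Algebra.linearMap T R) (Ideal.ofList (gs.take i) • ⊤ : Submodule T T) ≤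
      (Ideal.ofList (gs.take i) • ⊤ : Submodule T R) := by
      rw [Submodule.map_smul'']
      exact Submodule.smul_mono le_rfl le_top
    exact this ⟨y, hy, rfl⟩
  have h2 := h1 (Submodule.Quotient.mk (algebraMap T R x)) (by
    rw [← Submodule.Quotient.mk_smul, Submodule.Quotient.mk_eq_zero]
    have := hm _ hx
    rwa [smul_eq_mul, map_mul, ← Algebra.smul_def] at this)
  rw [Submodule.Quotient.mk_eq_zero] at h2 ⊢
  have h3 : Submodule.map r (Ideal.ofList (gs.take i) • ⊤ : Submodule T R) ≤
      (Ideal.ofList (gs.take i) • ⊤ : Submodule T T) := by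
    rw [Submodule.map_smul'']
    exact Submodule.smul_mono le_rfl le_top
  have := h3 ⟨_, h2, rfl⟩
  rwa [hr] at this

theorem aux_retract_finite {F T R : Type*} [Field F] [CommRing T] [CommRing R] [Algebra T R]
    [Algebra F T] [Algebra F R] [IsScalarTower F T R] (r : R →ₗ[T] T)
    (hr : ∀ t, r (algebraMap T R t) = t) (I : Ideal T)
    (h : Module.Finite F (R ⧸ I.map (algebraMap T R))) : Module.Finite F (T ⧸ I) := by
  let φ : (T ⧸ I) →ₐ[F] (R ⧸ I.map (algebraMap T R)) :=
    Ideal.quotientMapₐ _ (IsScalarTower.toAlgHom F T R) Ideal.le_comap_map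
  refine Module.Finite.of_injective φ.toLinearMap ?_
  refine Ideal.quotientMap_injective' (f := algebraMap T R) (H := Ideal.le_comap_map) ?_
  intro x hx
  have hx' : algebraMap T R x ∈ (I • ⊤ : Submodule T R) := by
    rw [Ideal.smul_top_eq_map]; exact hx
  have h3 : Submodule.map r (I • ⊤ : Submodule T R) ≤ (I • ⊤ : Submodule T T) := by
    rw [Submodule.map_smul'']
    exact Submodule.smul_mono le_rfl le_top
  have := h3 ⟨_, hx', rfl⟩
  rwa [hr, smul_eq_mul, Ideal.mul_top] at this

section
variable {F : Type*} [Field F] {n : ℕ}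

theorem matSub_X (M : Matrix (Fin n) (Fin n) F) (i : Fin n) :
    matSub M (X i) = ∑ j, M i j • X j := by
  simp [matSub]

theorem matSub_mul (M N : Matrix (Fin n) (Fin n) F) (p : MvPolynomial (Fin n) F) :
    matSub (M * N) p = matSub N (matSub M p) := by
  have : matSub (M * N) = (matSub N).comp (matSub M) := by
    apply MvPolynomial.algHom_ext
    intro i
    rw [AlgHom.comp_apply, matSub_X, matSub_X, map_sum]
    simp only [map_smul, matSub_X, Matrix.mul_apply, Finset.sum_smul, Finset.smul_sum, smul_smul]
    rw [Finset.sum_comm]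
  rw [this]; rfl

theorem matSub_one (p : MvPolynomial (Fin n) F) : matSub (1 : Matrix (Fin n) (Fin n) F) p = p := by
  have : matSub (1 : Matrix (Fin n) (Fin n) F) = AlgHom.id F _ := by
    apply MvPolynomial.algHom_ext
    intro i
    simp [matSub_X, Matrix.one_apply, ite_smul]
  rw [this]; rfl

theorem matSub_hom (M : Matrix (Fin n) (Fin n) F) {d : ℕ} {p : MvPolynomial (Fin n) F}
    (hp : p.IsHomogeneous d) : (matSub M p).IsHomogeneous d := by
  have := hp.aeval (fun i => ∑ j, M i j • (X j : MvPolynomial (Fin n) F)) (n := 1) (fun i => by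
    refine IsHomogeneous.sum _ _ _ fun j _ => ?_
    rw [smul_eq_C_mul]
    simpa using (isHomogeneous_C (Fin n) (M i j)).mul (isHomogeneous_X F j))
  rw [one_mul] at this
  exact this

theorem matSub_comp (M : Matrix (Fin n) (Fin n) F) (d : ℕ) (p : MvPolynomial (Fin n) F) :
    homogeneousComponent d (matSub M p) = matSub M (homogeneousComponent d p) := by
  conv_lhs => rw [← sum_homogeneousComponent p, map_sum, map_sum]
  have : ∀ i, homogeneousComponent d (matSub M (homogeneousComponent i p)) =
      if i = d then matSub M (homogeneousComponent d p) else 0 := by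
    intro i
    have h := matSub_hom M (homogeneousComponent_isHomogeneous i p)
    rw [homogeneousComponent_of_mem h]
    by_cases e : i = d
    · subst e; simp
    · rw [if_neg e, if_neg (fun h => e h.symm)]
  simp only [this]
  rw [Finset.sum_ite_eq']
  split_ifs with h
  · rfl
  · rw [homogeneousComponent_eq_zero, map_zero]
    simpa using h

theorem inv_closed {G : Type*} [Group G] (ρ : G →* GL (Fin n) F) (d : ℕ)
    {p : MvPolynomial (Fin n) F} (hp : p ∈ invariants ρ) :
    homogeneousComponent d p ∈ invariants ρ := by
  intro σ
  rw [← matSub_comp, hp σ]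

theorem hc_mul {e : ℕ} {a : MvPolynomial (Fin n) F} (ha : a.IsHomogeneous e) (d : ℕ)
    (x : MvPolynomial (Fin n) F) :
    homogeneousComponent d (a * x) = if e ≤ d then a * homogeneousComponent (d - e) x else 0 := by
  conv_lhs => rw [← sum_homogeneousComponent x, Finset.mul_sum, map_sum]
  have : ∀ i, homogeneousComponent d (a * homogeneousComponent i x) =
      if d = e + i then a * homogeneousComponent i x else 0 := by
    intro i
    rw [homogeneousComponent_of_mem (ha.mul (homogeneousComponent_isHomogeneous i x))]
  simp only [this]
  split_ifs with hle
  · obtain ⟨k, rfl⟩ := Nat.exists_eq_add_of_le hle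
    simp only [add_right_inj, Nat.add_sub_cancel_left]
    rw [Finset.sum_ite_eq]
    split_ifs with h
    · rfl
    · rw [homogeneousComponent_eq_zero, mul_zero]
      simpa using h
  · refine Finset.sum_eq_zero fun i _ => if_neg (by omega)

/-- The grading of a subalgebra. -/
noncomputable def subGr (R : Subalgebra F (MvPolynomial (Fin n) F)) (d : ℕ) : Submodule F R :=
  (homogeneousSubmodule (Fin n) F d).comap R.val.toLinearMap

theorem mem_subGr (R : Subalgebra F (MvPolynomial (Fin n) F)) (d : ℕ) (x : R) :
    x ∈ subGr R d ↔ (x : MvPolynomial (Fin n) F).IsHomogeneous d := Iff.rfl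

/-- The projections of a subalgebra. -/
noncomputable def subPi (R : Subalgebra F (MvPolynomial (Fin n) F))
    (hR : ∀ d, ∀ p ∈ R, homogeneousComponent d p ∈ R) (d : ℕ) : R →ₗ[F] R where
  toFun x := ⟨homogeneousComponent d x.1, hR d _ x.2⟩
  map_add' x y := Subtype.ext (map_add _ _ _)
  map_smul' c x := Subtype.ext (map_smul _ _ _)

theorem subPi_coe (R : Subalgebra F (MvPolynomial (Fin n) F))
    (hR : ∀ d, ∀ p ∈ R, homogeneousComponent d p ∈ R) (d : ℕ) (x : R) :
    (subPi R hR d x : MvPolynomial (Fin n) F) = homogeneousComponent d x.1 := rfl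

theorem subGrData (R : Subalgebra F (MvPolynomial (Fin n) F))
    (hR : ∀ d, ∀ p ∈ R, homogeneousComponent d p ∈ R) : GrData F (subGr R) (subPi R hR) where
  one_mem := isHomogeneous_one _ _
  mul_mem ha hb := IsHomogeneous.mul ha hb
  pi_mem d x := homogeneousComponent_isHomogeneous d x.1
  pi_mul d x ha := by
    apply Subtype.ext
    rw [subPi_coe]
    push_cast
    rw [hc_mul ((mem_subGr R _ _).1 ha), if_pos (by omega), Nat.add_sub_cancel_left]; rfl
  pi_mul_lt x ha hd := by
    apply Subtype.ext
    rw [subPi_coe]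
    push_cast
    rw [hc_mul ((mem_subGr R _ _).1 ha), if_neg (by omega)]
  pi_self hx := by
    apply Subtype.ext
    rw [subPi_coe, homogeneousComponent_of_mem ((mem_subGr R _ _).1 hx), if_pos rfl]
  pi_ne hx hd := by
    apply Subtype.ext
    rw [subPi_coe, homogeneousComponent_of_mem ((mem_subGr R _ _).1 hx), if_neg (fun h => hd (by first | exact h | exact h.symm))]; rfl
  exists_sum x := by
    refine ⟨x.1.totalDegree + 1, fun d hd => ?_, ?_⟩
    · apply Subtype.ext
      rw [subPi_coe, homogeneousComponent_eq_zero _ _ (by omega)]; rfl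
    · apply Subtype.ext
      rw [AddSubmonoidClass.coe_finsetSum]
      exact (sum_homogeneousComponent x.1).symm

variable {G : Type*} [Group G]

/-- The left action. -/
@[reducible] noncomputable def invAct (ρ : G →* GL (Fin n) F) :
    MulSemiringAction G (MvPolynomial (Fin n) F) where
  smul σ p := matSub (ρ σ⁻¹ : Matrix (Fin n) (Fin n) F) p
  one_smul p := by
    change matSub _ p = p
    rw [inv_one, map_one]; exact matSub_one p
  mul_smul σ τ p := by
    change matSub _ p = matSub _ (matSub _ p)
    rw [← matSub_mul, mul_inv_rev, map_mul]; rfl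
  smul_zero σ := map_zero _
  smul_add σ x y := map_add _ _ _
  smul_one σ := map_one _
  smul_mul σ x y := map_mul _ _ _

theorem inv_integral [Finite G] (ρ : G →* GL (Fin n) F) :
    Algebra.IsIntegral (invariants ρ) (MvPolynomial (Fin n) F) := by
  let _ := invAct ρ
  have : Algebra.IsInvariant (invariants ρ) (MvPolynomial (Fin n) F) G := ⟨fun b hb => by
    refine ⟨⟨b, fun σ => ?_⟩, rfl⟩
    have := hb σ⁻¹
    change matSub _ b = b at this
    rwa [inv_inv] at this⟩
  exact Algebra.IsInvariant.isIntegral (invariants ρ) (MvPolynomial (Fin n) F) G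

theorem inv_le (ρ : G →* GL (Fin n) F) (H : Subgroup G) :
    invariants ρ ≤ invariants (ρ.comp H.subtype) := fun _ hp σ => hp σ.1

theorem reynolds [Finite G] (ρ : G →* GL (Fin n) F) (H : Subgroup G)
    (hchar : ¬ ((ringChar F : ℕ) ∣ H.index)) :
    ∃ r : MvPolynomial (Fin n) F →ₗ[F] MvPolynomial (Fin n) F,
      (∀ x ∈ invariants (ρ.comp H.subtype), r x ∈ invariants ρ) ∧
      (∀ x ∈ invariants ρ, r x = x) ∧ (∀ t ∈ invariants ρ, ∀ x, r (t * x) = t * r x) := by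
  classical
  have : Fintype (G ⧸ H) := Fintype.ofFinite _
  have hi : (H.index : F) ≠ 0 := fun h => hchar ((ringChar.spec F _).1 h)
  let a : G → MvPolynomial (Fin n) F →ₐ[F] MvPolynomial (Fin n) F :=
    fun σ => matSub (ρ σ⁻¹ : Matrix (Fin n) (Fin n) F)
  have ha : ∀ σ τ x, a (σ * τ) x = a σ (a τ x) := by
    intro σ τ x
    simp only [a]
    rw [← matSub_mul, mul_inv_rev, map_mul]; rfl
  let r : MvPolynomial (Fin n) F →ₗ[F] MvPolynomial (Fin n) F :=
    (H.index : F)⁻¹ • ∑ q : G ⧸ H, (a q.out).toLinearMap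
  have hr : ∀ x, r x = (H.index : F)⁻¹ • ∑ q : G ⧸ H, a q.out x := by
    intro x; simp [r]
  refine ⟨r, ?_, ?_, ?_⟩
  · intro x hx
    have hax : ∀ σ τ : G, (σ : G ⧸ H) = τ → a σ x = a τ x := by
      intro σ τ h
      rw [QuotientGroup.eq] at h
      have : τ = σ * (σ⁻¹ * τ) := by group
      rw [this, ha]
      congr 1
      exact (hx ⟨(σ⁻¹ * τ)⁻¹, H.inv_mem h⟩).symm
    have key : ∀ σ, a σ (r x) = r x := by
      intro σ
      rw [hr, map_smul, map_sum]
      congr 1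
      refine Fintype.sum_equiv (MulAction.toPerm σ) _ _ fun q => ?_
      rw [← ha]
      apply hax
      rw [MulAction.toPerm_apply, QuotientGroup.out_eq', ← smul_eq_mul,
        ← MulAction.Quotient.smul_coe, QuotientGroup.out_eq']
    intro σ
    have := key σ⁻¹
    simpa only [a, inv_inv] using this
  · intro x hx
    rw [hr]
    have : ∀ q : G ⧸ H, a q.out x = x := fun q => hx _
    simp only [this, Finset.sum_const, Finset.card_univ]
    rw [← Nat.card_eq_fintype_card, ← Subgroup.index, ← Nat.cast_smul_eq_nsmul F, smul_smul,
      inv_mul_cancel₀ hi, one_smul]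
  · intro t ht x
    rw [hr, hr, mul_smul_comm, Finset.mul_sum]
    congr 1
    refine Finset.sum_congr rfl fun q _ => ?_
    rw [map_mul]
    congr 1
    exact ht _

end

/-- Let `H ≤ G` be a subgroup such that `char F` does not divide the index
`[G : H]`. If the invariant ring `S[V]^H` is Cohen-Macaulay, then `S[V]^G` is
Cohen-Macaulay as well. -/
theorem stmt0 {F : Type*} [Field F] {G : Type*} [Group G] [Finite G] {n : ℕ}
    (ρ : G →* GL (Fin n) F) (H : Subgroup G)
    (hchar : ¬ ((ringChar F : ℕ) ∣ H.index))
    (hH : IsCM (invariants (ρ.comp H.subtype))) :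
    IsCM (invariants ρ) := by
  obtain ⟨f, ⟨hf1, hf2, hf3⟩, hf4⟩ := hH
  obtain ⟨r0, hr1, hr2, hr3⟩ := reynolds ρ H hchar
  have hTR := inv_le ρ H
  have hcR : ∀ d, ∀ p ∈ invariants (ρ.comp H.subtype),
    homogeneousComponent d p ∈ invariants (ρ.comp H.subtype) := fun d p hp => inv_closed _ d hp
  have hcT : ∀ d, ∀ p ∈ invariants ρ, homogeneousComponent d p ∈ invariants ρ :=
    fun d p hp => inv_closed _ d hp
  have hint := inv_integral ρ
  generalize invariants (ρ.comp H.subtype) = R at *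
  generalize invariants ρ = T at *
  let _ : Algebra T R := (Subalgebra.inclusion hTR).toAlgebra
  have hcoe : ∀ t : T, ((algebraMap T R t : R) : MvPolynomial (Fin n) F) = t := fun t => rfl
  have : IsScalarTower F T R := IsScalarTower.of_algebraMap_eq fun x => rfl
  have : IsScalarTower T R (MvPolynomial (Fin n) F) := IsScalarTower.of_algebraMap_eq fun x => rfl
  have hint' : Algebra.IsIntegral T R := ⟨fun x =>
    (isIntegral_algebraMap_iff (B := MvPolynomial (Fin n) F) Subtype.val_injective).1 (hint.isIntegral _)⟩
  let r : R →ₗ[T] T :=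
    { toFun := fun x => ⟨r0 x, hr1 _ x.2⟩
      map_add' := fun x y => Subtype.ext (map_add r0 _ _)
      map_smul' := fun t x => Subtype.ext (hr3 _ t.2 _) }
  have hr : ∀ t, r (algebraMap T R t) = t := fun t => Subtype.ext (hr2 _ t.2)
  have hregf := aux_free_reg f hf1 hf4
  have hNR : IsNoetherianRing R := (aux_finite f hf1 hf3 _ (by simp) hregf).1
  obtain ⟨gs, hlen, hgs, hgreg⟩ := (subGrData R hcR).exchange (subGrData T hcT)
    (fun d t => rfl) (fun d t ht => ht) (List.ofFn f) []
    (by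
      intro x hx
      obtain ⟨i, rfl⟩ := List.mem_ofFn.1 hx
      exact hf2 i)
    (by simp) (by simpa using hregf)
  have hlen' : gs.length = n := by simpa using hlen
  let g : Fin n → T := fun i => gs.get (i.cast hlen'.symm)
  have hgof : List.ofFn g = gs := by
    apply List.ext_getElem <;> simp [g, hlen']
  have hfin := (aux_finite f hf1 hf3 (gs.map (algebraMap T R)) (by simpa using hlen') hgreg).2
  rw [← Ideal.map_ofList] at hfin
  have hfinT := aux_retract_finite (F := F) r hr _ hfin
  rw [← hgof, aux_ofList] at hfinT
  have hregT := aux_retract r hr gs hgreg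
  rw [← hgof] at hregT
  have hg : ∀ i, ∃ d, 0 < d ∧ g i ∈ subGr T d := fun i => hgs _ (List.get_mem gs _)
  obtain ⟨h1, h2, h3⟩ := (subGrData T hcT).free g hg hregT hfinT
  exact ⟨g, ⟨h1, hg, h2⟩, h3⟩
end

section
/- The G-invariant part (U'·S[U])^G of the ideal of S[U] generated by U' equals the principal ideal f̂·S[U]^G of S[U]^G, and the map induced by β yields an isomorphism of graded F-algebras S[U]^G/(f̂·S[U]^G) ≅ S[V]^G. -/
set_option synthInstance.maxHeartbeats 1000000
set_option maxHeartbeats 1000000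

open MvPolynomial

/-- The algebra homomorphism `S[U] → S[V]` induced by a linear map `U → V` given by a
(rectangular) matrix acting on the right on row vectors. -/
noncomputable def betaAlg {F : Type*} [CommRing F] {m : ℕ}
    (B : Matrix (Fin (m + 1)) (Fin m) F) :
    MvPolynomial (Fin (m + 1)) F →ₐ[F] MvPolynomial (Fin m) F :=
  aeval (fun i => ∑ j, B i j • X j)

/-- The linear form in `S[U]₁` corresponding to a vector of `U`. -/
noncomputable def linForm {F : Type*} [CommRing F] {n : ℕ} (v : Fin n → F) :
    MvPolynomial (Fin n) F :=
  ∑ i, v i • X i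

/-- Algebra map induced by a rectangular matrix. -/
noncomputable def rectSub {F : Type*} [CommRing F] {a b : ℕ} (M : Matrix (Fin a) (Fin b) F) :
    MvPolynomial (Fin a) F →ₐ[F] MvPolynomial (Fin b) F :=
  aeval (fun i => linForm (M i))

theorem rectSub_linForm {F : Type*} [CommRing F] {a b : ℕ} (M : Matrix (Fin a) (Fin b) F)
    (v : Fin a → F) : rectSub M (linForm v) = linForm (Matrix.vecMul v M) := by
  simp only [rectSub, linForm, map_sum, map_smul, aeval_X, Matrix.vecMul, dotProduct,
    Finset.smul_sum, Finset.sum_smul, smul_smul]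
  exact Finset.sum_comm

theorem rectSub_comp {F : Type*} [CommRing F] {a b c : ℕ} (M : Matrix (Fin a) (Fin b) F)
    (N : Matrix (Fin b) (Fin c) F) (p : MvPolynomial (Fin a) F) :
    rectSub N (rectSub M p) = rectSub (M * N) p := by
  have : (rectSub N).comp (rectSub M) = rectSub (M * N) := by
    apply MvPolynomial.algHom_ext
    intro i
    have h1 : rectSub M (X i) = linForm (M i) := by simp [rectSub]
    have h2 : rectSub (M * N) (X i) = linForm ((M * N) i) := by simp [rectSub]
    rw [AlgHom.comp_apply, h1, h2, rectSub_linForm]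
    rfl
  exact DFunLike.congr_fun this p

theorem linForm_single {F : Type*} [CommRing F] {a : ℕ} (i : Fin a) :
    linForm (Pi.single i (1 : F)) = X i := by
  simp [linForm, Pi.single_apply]

theorem rectSub_one {F : Type*} [CommRing F] {a : ℕ} (p : MvPolynomial (Fin a) F) :
    rectSub (1 : Matrix (Fin a) (Fin a) F) p = p := by
  have : rectSub (1 : Matrix (Fin a) (Fin a) F) = AlgHom.id F _ := by
    apply MvPolynomial.algHom_ext
    intro i
    have := rectSub_linForm (1 : Matrix (Fin a) (Fin a) F) (Pi.single i 1)
    rw [Matrix.vecMul_one, linForm_single] at this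
    simpa using this
  rw [this]; rfl

theorem linForm_ne_zero {F : Type*} [CommRing F] {a : ℕ} (v : Fin a → F) (hv : v ≠ 0) :
    linForm v ≠ 0 := by
  intro h
  apply hv
  funext i
  have := congrArg (coeff (Finsupp.single i 1)) h
  simpa [linForm, coeff_sum, coeff_X', Finsupp.single_left_inj] using this

/-- In the situation of a split short exact sequence
`0 → U' → U →(β) V → 0` of right `FG`-modules, with `U' ≅ F` the trivial module spanned by a
`G`-fixed element `f̂ ∈ U ⊆ S[U]₁`: the `G`-invariant part `(U'·S[U])^G` of the ideal of
`S[U]` generated by `U'` equals the principal ideal `f̂·S[U]^G` of `S[U]^G`, and the map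
induced by `β` yields an isomorphism of graded `F`-algebras
`S[U]^G/(f̂·S[U]^G) ≅ S[V]^G`. -/
theorem stmt2 {F : Type*} [Field F] {G : Type*} [Group G] [Finite G] {m : ℕ}
    (ρU : G →* GL (Fin (m + 1)) F) (ρV : G →* GL (Fin m) F)
    (B : Matrix (Fin (m + 1)) (Fin m) F) (fhat : Fin (m + 1) → F)
    -- `β` is surjective:
    (hsur : ∀ v : Fin m → F, ∃ u : Fin (m + 1) → F, Matrix.vecMul u B = v)
    -- the kernel of `β` is `U' = F·f̂`:
    (hker : ∀ u : Fin (m + 1) → F, Matrix.vecMul u B = 0 ↔ ∃ c : F, u = c • fhat)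
    (hne : fhat ≠ 0)
    -- `β` is `G`-equivariant:
    (hequiv : ∀ σ : G, (ρU σ : Matrix (Fin (m + 1)) (Fin (m + 1)) F) * B
      = B * (ρV σ : Matrix (Fin m) (Fin m) F))
    -- `f̂` is `G`-fixed:
    (hfix : ∀ σ : G, Matrix.vecMul fhat (ρU σ : Matrix (Fin (m + 1)) (Fin (m + 1)) F) = fhat)
    -- the sequence splits, via a `G`-equivariant section `γ` of `β`:
    (hsplit : ∃ γ : Matrix (Fin m) (Fin (m + 1)) F, γ * B = 1 ∧
      ∀ σ : G, (ρV σ : Matrix (Fin m) (Fin m) F) * γ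
        = γ * (ρU σ : Matrix (Fin (m + 1)) (Fin (m + 1)) F)) :
    -- `(U'·S[U])^G = f̂·S[U]^G`:
    ({p : MvPolynomial (Fin (m + 1)) F |
        p ∈ Ideal.span {linForm fhat} ∧ p ∈ invariants ρU}
      = {p : MvPolynomial (Fin (m + 1)) F |
          ∃ h ∈ invariants ρU, p = linForm fhat * h}) ∧
    -- `β` maps `S[U]^G` into `S[V]^G` …
    (∀ p ∈ invariants ρU, betaAlg B p ∈ invariants ρV) ∧
    -- … surjectively onto `S[V]^G` …
    (∀ q ∈ invariants ρV, ∃ p ∈ invariants ρU, betaAlg B p = q) ∧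
    -- … with kernel exactly `f̂·S[U]^G`; i.e. `β` induces `S[U]^G/(f̂·S[U]^G) ≅ S[V]^G`:
    (∀ p ∈ invariants ρU,
      (betaAlg B p = 0 ↔ ∃ h ∈ invariants ρU, p = linForm fhat * h)) := by
  obtain ⟨γ, hγB, hγ⟩ := hsplit
  have hmat : ∀ (M : Matrix (Fin (m + 1)) (Fin (m + 1)) F), matSub M = rectSub M := fun _ => rfl
  have hmat' : ∀ (M : Matrix (Fin m) (Fin m) F), matSub M = rectSub M := fun _ => rfl
  have hb : betaAlg B = rectSub B := rfl
  have hinvU : ∀ p, p ∈ invariants ρU ↔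
      ∀ σ : G, rectSub (ρU σ : Matrix (Fin (m + 1)) (Fin (m + 1)) F) p = p := fun _ => Iff.rfl
  have hinvV : ∀ p, p ∈ invariants ρV ↔
      ∀ σ : G, rectSub (ρV σ : Matrix (Fin m) (Fin m) F) p = p := fun _ => Iff.rfl
  have hf0 := linForm_ne_zero fhat hne
  have hdiv : ∀ h, linForm fhat * h ∈ invariants ρU → h ∈ invariants ρU := by
    intro h hh
    rw [hinvU] at hh ⊢
    intro σ
    have := hh σ
    rw [map_mul, rectSub_linForm, hfix σ] at this
    exact mul_left_cancel₀ hf0 this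
  have hβf : rectSub B (linForm fhat) = 0 := by
    rw [rectSub_linForm, (hker fhat).2 ⟨1, by simp⟩]
    simp [linForm]
  have hfinv : linForm fhat ∈ invariants ρU := by
    rw [hinvU]
    intro σ
    rw [rectSub_linForm, hfix σ]
  have hkey : ∀ p, p - rectSub (B * γ) p ∈ Ideal.span {linForm fhat} := by
    intro p
    rw [← Ideal.Quotient.mk_eq_mk_iff_sub_mem]
    have : (Ideal.Quotient.mkₐ F (Ideal.span {linForm fhat})) =
        (Ideal.Quotient.mkₐ F (Ideal.span {linForm fhat})).comp (rectSub (B * γ)) := by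
      apply MvPolynomial.algHom_ext
      intro i
      rw [AlgHom.comp_apply, ← linForm_single, rectSub_linForm, Ideal.Quotient.mkₐ_eq_mk,
        Ideal.Quotient.mk_eq_mk_iff_sub_mem]
      obtain ⟨c, hc⟩ := (hker (Pi.single i 1 - Matrix.vecMul (Pi.single i 1) (B * γ))).1 (by
        rw [Matrix.sub_vecMul, Matrix.vecMul_vecMul, Matrix.mul_assoc, hγB, Matrix.mul_one,
          sub_self])
      rw [Ideal.mem_span_singleton']
      refine ⟨C c, ?_⟩
      have e : linForm (Pi.single i 1 - Matrix.vecMul (Pi.single i 1) (B * γ)) =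
          linForm (Pi.single i (1 : F)) - linForm (Matrix.vecMul (Pi.single i 1) (B * γ)) := by
        simp only [linForm, Pi.sub_apply, sub_smul, Finset.sum_sub_distrib]
      rw [← e, hc]
      simp only [linForm, Pi.smul_apply, smul_eq_mul, Finset.mul_sum, mul_smul,
        ← MvPolynomial.smul_eq_C_mul]
    exact DFunLike.congr_fun this p
  refine ⟨?_, ?_, ?_, ?_⟩
  · ext p
    constructor
    · rintro ⟨h1, h2⟩
      obtain ⟨h, rfl⟩ := Ideal.mem_span_singleton.1 h1
      exact ⟨h, hdiv h h2, rfl⟩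
    · rintro ⟨h, hh, rfl⟩
      exact ⟨Ideal.mem_span_singleton.2 ⟨h, rfl⟩, mul_mem hfinv hh⟩
  · intro p hp
    rw [hinvV, hb]
    intro σ
    rw [rectSub_comp, ← hequiv, ← rectSub_comp, (hinvU p).1 hp σ]
  · intro q hq
    refine ⟨rectSub γ q, ?_, ?_⟩
    · rw [hinvU]
      intro σ
      rw [rectSub_comp, ← hγ, ← rectSub_comp, (hinvV q).1 hq σ]
    · rw [hb, rectSub_comp, hγB, rectSub_one]
  · intro p hp
    rw [hb]
    constructor
    · intro h0
      have := hkey p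
      rw [← rectSub_comp, h0, map_zero, sub_zero] at this
      obtain ⟨h, rfl⟩ := Ideal.mem_span_singleton.1 this
      exact ⟨h, hdiv h hp, rfl⟩
    · rintro ⟨h, _, rfl⟩
      rw [map_mul, hβf, zero_mul]
end

section
/- Let H ≤ G be a subgroup such that char(F) does not divide [G:H], let R = S[V]^G and S = S[V]^H (so R ⊆ S), and let {f_1, …, f_n} ⊆ R be a homogeneous system of parameters of R. Then the kernel of the composite F-algebra homomorphism R ↪ S → S/(f_1 S + … + f_n S) is exactly the ideal f_1 R + … + f_n R of R generated by f_1, …, f_n. -/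
set_option synthInstance.maxHeartbeats 1000000
set_option maxHeartbeats 1000000

open MvPolynomial

theorem matSub_matSub {F : Type*} [CommRing F] {n : ℕ} (M N : Matrix (Fin n) (Fin n) F)
    (p : MvPolynomial (Fin n) F) : matSub M (matSub N p) = matSub (N * M) p := by
  have : (matSub M).comp (matSub N) = matSub (N * M) := by
    apply MvPolynomial.algHom_ext
    intro i
    simp only [matSub, AlgHom.comp_apply, aeval_X, map_sum, map_smul, Matrix.mul_apply,
      Finset.smul_sum, Finset.sum_smul, smul_smul]
    rw [Finset.sum_comm]
  exact DFunLike.congr_fun this p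

open Classical in
theorem transfer_aux {F : Type*} [Field F] {G : Type*} [Group G] [Finite G] {n : ℕ}
    (ρ : G →* GL (Fin n) F) (H : Subgroup G) [Fintype (G ⧸ H)]
    (p : MvPolynomial (Fin n) F) (hp : p ∈ invariants (ρ.comp H.subtype)) :
    ∑ q : G ⧸ H, matSub ((ρ (q.out)⁻¹ : GL (Fin n) F) : Matrix (Fin n) (Fin n) F) p
      ∈ invariants ρ := by
  have key : ∀ (g : G) (q : G ⧸ H), (g : G ⧸ H) = q →
      matSub ((ρ g⁻¹ : GL (Fin n) F) : Matrix (Fin n) (Fin n) F) p =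
      matSub ((ρ (q.out)⁻¹ : GL (Fin n) F) : Matrix (Fin n) (Fin n) F) p := by
    intro g q h
    have h2 : q.out⁻¹ * g ∈ H := by
      rw [← QuotientGroup.eq, h]
      exact Quotient.out_eq' q
    have h3 := hp ⟨_, h2⟩
    have h3 : matSub ((ρ (q.out⁻¹ * g) : GL (Fin n) F) : Matrix (Fin n) (Fin n) F) p = p := h3
    conv_lhs => rw [← h3]
    rw [matSub_matSub, ← Units.val_mul, ← map_mul]
    congr 4
    group
  intro τ
  rw [map_sum]
  refine Fintype.sum_equiv (MulAction.toPerm (τ⁻¹ : G)) _ _ ?_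
  intro q
  rw [matSub_matSub, ← Units.val_mul, ← map_mul]
  rw [← key (τ⁻¹ * q.out)]
  · congr 4
    group
  · conv_rhs => rw [← Quotient.out_eq' q]
    rfl

/-- Let `H ≤ G` be a subgroup such that `char F` does not divide `[G : H]`,
let `R = S[V]^G` and `S = S[V]^H` (so `R ⊆ S`), and let `{f₁, …, fₙ} ⊆ R` be a homogeneous
system of parameters of `R`. Then the kernel of the composite `F`-algebra homomorphism
`R ↪ S → S/(f₁S + … + fₙS)` is exactly the ideal `f₁R + … + fₙR` of `R` generated by
`f₁, …, fₙ`; i.e. for `r ∈ R`, `r` lies in `f₁S + … + fₙS` if and only if `r` lies in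
`f₁R + … + fₙR`. -/
theorem stmt6 {F : Type*} [Field F] {G : Type*} [Group G] [Finite G] {n : ℕ}
    (ρ : G →* GL (Fin n) F) (H : Subgroup G)
    (hchar : ¬ ((ringChar F : ℕ) ∣ H.index))
    (f : Fin n → (invariants ρ)) (hf : IsHSOP (invariants ρ) f) :
    ∀ r : MvPolynomial (Fin n) F, r ∈ invariants ρ →
      ((∃ c : Fin n → MvPolynomial (Fin n) F,
          (∀ i, c i ∈ invariants (ρ.comp H.subtype)) ∧
          r = ∑ i, (f i : MvPolynomial (Fin n) F) * c i) ↔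
       (∃ c : Fin n → MvPolynomial (Fin n) F,
          (∀ i, c i ∈ invariants ρ) ∧
          r = ∑ i, (f i : MvPolynomial (Fin n) F) * c i)) := by
  intro r hr
  constructor
  · rintro ⟨c, hc, hrc⟩
    classical
    haveI : Fintype (G ⧸ H) := Fintype.ofFinite _
    have hk : (H.index : F) ≠ 0 := fun h => hchar ((ringChar.spec F _).1 h)
    refine ⟨fun i => (H.index : F)⁻¹ • ∑ q : G ⧸ H,
      matSub ((ρ (q.out)⁻¹ : GL (Fin n) F) : Matrix (Fin n) (Fin n) F) (c i),
      fun i => Subalgebra.smul_mem _ (transfer_aux ρ H _ (hc i)) _, ?_⟩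
    have h1 : ∀ q : G ⧸ H, r = ∑ i, (f i : MvPolynomial (Fin n) F) *
        matSub ((ρ (q.out)⁻¹ : GL (Fin n) F) : Matrix (Fin n) (Fin n) F) (c i) := by
      intro q
      have h2 := hr (q.out)⁻¹
      conv_lhs => rw [← h2, hrc]
      rw [map_sum]
      refine Finset.sum_congr rfl fun i _ => ?_
      rw [map_mul, (f i).2 (q.out)⁻¹]
    have h3 : (H.index : F) • r = ∑ q : G ⧸ H, ∑ i, (f i : MvPolynomial (Fin n) F) *
        matSub ((ρ (q.out)⁻¹ : GL (Fin n) F) : Matrix (Fin n) (Fin n) F) (c i) := by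
      rw [← Finset.sum_congr rfl fun q _ => h1 q]
      rw [Finset.sum_const, Finset.card_univ, ← Nat.card_eq_fintype_card, Nat.cast_smul_eq_nsmul]
      rfl
    rw [Finset.sum_comm] at h3
    simp only [mul_smul_comm, ← Finset.smul_sum, Finset.mul_sum]
    rw [← h3, inv_smul_smul₀ hk]
  · rintro ⟨c, hc, hrc⟩
    exact ⟨c, fun i σ => hc i σ, hrc⟩
end

section
/- The vector v = (1,1,1,1,1,1,1) ∈ W is fixed by D_W(σ) for every σ ∈ G, the subspace W' = {w ∈ W : w_7 = 0} is a G-submodule of W, and W = W' ⊕ F_2·v as G-modules; in particular the extension 0 → W' → W → F_2 → 0 of G-modules (with F_2 the trivial module) splits. -/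
set_option synthInstance.maxHeartbeats 1000000
set_option maxHeartbeats 1000000

/-- The field with two elements. -/
abbrev F2 := ZMod 2

/-- `G = GL₃(𝔽₂)`. -/
abbrev G3 := GL (Fin 3) F2

/-- The generator `A` of `G`. -/
def Agen : G3 := ⟨!![1,0,1; 0,1,0; 0,0,1], !![1,0,1; 0,1,0; 0,0,1], by decide, by decide⟩

/-- The generator `B` of `G`. -/
def Bgen : G3 := ⟨!![0,0,1; 1,0,0; 0,1,0], !![0,1,0; 0,0,1; 1,0,0], by decide, by decide⟩

/-- The matrix `D_W(A)`. -/
def DWA : Matrix (Fin 7) (Fin 7) F2 :=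
  !![1,0,0,0,0,0,0; 0,1,0,0,0,0,0; 1,0,1,0,0,0,0; 0,0,0,1,0,0,0;
     0,0,0,1,1,0,0; 1,0,0,0,0,1,0; 0,0,0,1,0,0,1]

/-- The matrix `D_W(B)`. -/
def DWB : Matrix (Fin 7) (Fin 7) F2 :=
  !![0,0,1,0,0,0,0; 1,0,0,0,0,0,0; 0,1,0,0,0,0,0; 0,0,0,0,0,1,0;
     0,0,0,1,0,0,0; 0,0,0,0,1,0,0; 0,0,0,0,0,0,1]

/-- The vector `v = (1,1,1,1,1,1,1) ∈ W = 𝔽₂⁷`. -/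
def vAll : Fin 7 → F2 := ![1,1,1,1,1,1,1]

/-- The subspace `W' = {w ∈ W : w₇ = 0}`. -/
def W7' : Submodule F2 (Fin 7 → F2) where
  carrier := {w | w 6 = 0}
  add_mem' := by
    intro a b ha hb
    simp only [Set.mem_setOf_eq, Pi.add_apply] at *
    rw [ha, hb, add_zero]
  zero_mem' := rfl
  smul_mem' := by
    intro c a ha
    simp only [Set.mem_setOf_eq, Pi.smul_apply, smul_eq_mul] at *
    rw [ha, mul_zero]

def InCl (M : Matrix (Fin 3) (Fin 3) F2) : Prop :=
  ∃ g : G3, g ∈ Subgroup.closure ({Agen, Bgen} : Set G3) ∧ (g : Matrix (Fin 3) (Fin 3) F2) = M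

theorem InCl.mul {M N : Matrix (Fin 3) (Fin 3) F2} (hM : InCl M) (hN : InCl N) :
    InCl (M * N) := by
  obtain ⟨g, hg, rfl⟩ := hM
  obtain ⟨h, hh, rfl⟩ := hN
  exact ⟨g * h, mul_mem hg hh, rfl⟩

theorem InCl.one : InCl 1 := ⟨1, one_mem _, rfl⟩

theorem inCl_transvection (i j : Fin 3) (hij : i ≠ j) (c : F2) :
    InCl (Matrix.transvection i j c) := by
  have hA : InCl Agen.val := ⟨Agen, Subgroup.subset_closure (by simp), rfl⟩
  have hB : InCl Bgen.val := ⟨Bgen, Subgroup.subset_closure (by simp), rfl⟩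
  have hX := (hB.mul hA).mul (hB.mul hB)
  have hY := (hB.mul hB).mul (hA.mul hB)
  have h1 := (hA.mul hX).mul (hA.mul hX)
  have h2 := (hA.mul hY).mul (hA.mul hY)
  have h3 := (hX.mul hY).mul (hX.mul hY)
  have key : ∀ i j : Fin 3, i ≠ j → ∀ c : F2,
      Matrix.transvection i j c = 1 ∨ Matrix.transvection i j c = Agen.val ∨
      Matrix.transvection i j c = !![1,0,0; 1,1,0; 0,0,1] ∨
      Matrix.transvection i j c = !![1,0,0; 0,1,0; 0,1,1] ∨
      Matrix.transvection i j c = !![1,1,0; 0,1,0; 0,0,1] ∨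
      Matrix.transvection i j c = !![1,0,0; 0,1,1; 0,0,1] ∨
      Matrix.transvection i j c = !![1,0,0; 0,1,0; 1,0,1] := by
    decide
  have e1 : Bgen.val * Agen.val * (Bgen.val * Bgen.val) = !![1,0,0; 1,1,0; 0,0,1] := by decide
  have e2 : Bgen.val * Bgen.val * (Agen.val * Bgen.val) = !![1,0,0; 0,1,0; 0,1,1] := by decide
  rw [e1] at hX h1 h3
  rw [e2] at hY h2 h3
  rw [show Agen.val * !![1,0,0; 1,1,0; 0,0,1] * (Agen.val * !![1,0,0; 1,1,0; 0,0,1])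
    = !![1,0,0; 0,1,1; 0,0,1] by decide] at h1
  rw [show Agen.val * !![1,0,0; 0,1,0; 0,1,1] * (Agen.val * !![1,0,0; 0,1,0; 0,1,1])
    = !![1,1,0; 0,1,0; 0,0,1] by decide] at h2
  rw [show (!![1,0,0; 1,1,0; 0,0,1] * !![1,0,0; 0,1,0; 0,1,1] *
      (!![1,0,0; 1,1,0; 0,0,1] * !![1,0,0; 0,1,0; 0,1,1]) : Matrix (Fin 3) (Fin 3) F2)
    = !![1,0,0; 0,1,0; 1,0,1] by decide] at h3
  rcases key i j hij c with h | h | h | h | h | h | h <;> rw [h]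
  exacts [InCl.one, hA, hX, hY, h2, h1, h3]

theorem closure_gen : Subgroup.closure ({Agen, Bgen} : Set G3) = ⊤ := by
  rw [eq_top_iff]
  intro g _
  have hdet : (g : Matrix (Fin 3) (Fin 3) F2).det ≠ 0 :=
    ((Matrix.isUnit_iff_isUnit_det _).1 g.isUnit).ne_zero
  have : InCl (g : Matrix (Fin 3) (Fin 3) F2) := by
    refine Matrix.diagonal_transvection_induction_of_det_ne_zero InCl _ hdet ?_ ?_ ?_
    · intro d hd
      rw [Matrix.det_diagonal, Finset.prod_ne_zero_iff] at hd
      have h1 : d = fun _ => 1 := by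
        funext i
        have := hd i (Finset.mem_univ i)
        revert this
        generalize d i = x
        revert x
        decide
      rw [h1, Matrix.diagonal_one]
      exact InCl.one
    · intro t
      exact inCl_transvection t.i t.j t.hij t.c
    · intro A B _ _ hA hB
      exact hA.mul hB
  obtain ⟨h, hh, e⟩ := this
  rwa [← Units.ext e]

/-- The vector `v = (1,…,1) ∈ W` is fixed by `D_W(σ)` for every `σ ∈ G`,
the subspace `W' = {w ∈ W : w₇ = 0}` is a `G`-submodule of `W`, and `W = W' ⊕ 𝔽₂·v` as
`G`-modules; in particular the extension `0 → W' → W → 𝔽₂ → 0` of `G`-modules (with `𝔽₂`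
the trivial module) splits. -/
theorem stmt8 (D : G3 →* GL (Fin 7) F2)
    (hA : (D Agen : Matrix (Fin 7) (Fin 7) F2) = DWA)
    (hB : (D Bgen : Matrix (Fin 7) (Fin 7) F2) = DWB) :
    -- `v` is fixed by every `D_W(σ)` …
    (∀ σ : G3, Matrix.vecMul vAll (D σ : Matrix (Fin 7) (Fin 7) F2) = vAll) ∧
    -- … `W'` is a `G`-submodule …
    (∀ σ : G3, ∀ w ∈ W7', Matrix.vecMul w (D σ : Matrix (Fin 7) (Fin 7) F2) ∈ W7') ∧
    -- … and `W = W' ⊕ 𝔽₂·v` as `G`-modules: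
    IsCompl W7' (Submodule.span F2 {vAll}) := by
  have mem7 : ∀ w : Fin 7 → F2, w ∈ W7' ↔ w 6 = 0 := fun w => Iff.rfl
  have key : ∀ σ : G3, Matrix.vecMul vAll (D σ : Matrix (Fin 7) (Fin 7) F2) = vAll ∧
      ∀ w : Fin 7 → F2, Matrix.vecMul w (D σ : Matrix (Fin 7) (Fin 7) F2) 6 = w 6 := by
    intro σ
    have hσ : σ ∈ Subgroup.closure ({Agen, Bgen} : Set G3) := by
      rw [closure_gen]; trivial
    induction hσ using Subgroup.closure_induction with
    | mem x hx =>
      rcases hx with rfl | rfl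
      · rw [hA]
        refine ⟨by decide, fun w => ?_⟩
        simp [Matrix.vecMul, dotProduct, DWA, Fin.sum_univ_succ]

      · rw [hB]
        refine ⟨by decide, fun w => ?_⟩
        simp [Matrix.vecMul, dotProduct, DWB, Fin.sum_univ_succ]

    | one => simp
    | mul x y _ _ hx hy =>
      simp only [map_mul, Units.val_mul, ← Matrix.vecMul_vecMul]
      refine ⟨by rw [hx.1, hy.1], fun w => by rw [hy.2, hx.2]⟩
    | inv x _ hx =>
      have e : (D x : Matrix (Fin 7) (Fin 7) F2) * (D x⁻¹ : GL (Fin 7) F2).val = 1 := by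
        rw [← Units.val_mul, ← map_mul]; simp
      have e' : (D x⁻¹ : GL (Fin 7) F2).val * (D x : Matrix (Fin 7) (Fin 7) F2) = 1 := by
        rw [← Units.val_mul, ← map_mul]; simp
      refine ⟨?_, fun w => ?_⟩
      · conv_lhs => rw [← hx.1]
        rw [Matrix.vecMul_vecMul, e, Matrix.vecMul_one]
      · rw [← hx.2 (Matrix.vecMul w _), Matrix.vecMul_vecMul, e', Matrix.vecMul_one]
  refine ⟨fun σ => (key σ).1, fun σ w hw => ?_, ?_⟩
  · rw [mem7] at hw ⊢
    rw [(key σ).2, hw]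
  · have hv : vAll 6 = 1 := rfl
    constructor
    · rw [Submodule.disjoint_def]
      intro x hx hx'
      obtain ⟨c, rfl⟩ := Submodule.mem_span_singleton.1 hx'
      rw [mem7] at hx
      rw [Pi.smul_apply, hv, smul_eq_mul, mul_one] at hx
      rw [hx, zero_smul]
    · rw [codisjoint_iff, eq_top_iff]
      intro w _
      rw [Submodule.mem_sup]
      refine ⟨w - w 6 • vAll, ?_, w 6 • vAll,
        Submodule.smul_mem _ _ (Submodule.mem_span_singleton_self _), by simp⟩
      rw [mem7]
      simp [hv]
end

section
/- The quartic polynomial C_K = x^4 + y^4 + z^4 + x^2y^2 + y^2z^2 + z^2x^2 + x^2yz + xy^2z + xyz^2 ∈ F_2[x,y,z] is invariant under GL_3(F_2): for every σ ∈ GL_3(F_2), substituting the three linear forms given by (x,y,z)·σ for the variables (x,y,z) in C_K returns C_K. -/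
set_option synthInstance.maxHeartbeats 1000000
set_option maxHeartbeats 1000000

open MvPolynomial

/-- The twisted Klein quartic
`C_K = x⁴ + y⁴ + z⁴ + x²y² + y²z² + z²x² + x²yz + xy²z + xyz²` in `𝔽₂[x,y,z]`,
with `x = X 0`, `y = X 1`, `z = X 2`. -/
noncomputable def CK : MvPolynomial (Fin 3) F2 :=
  X 0 ^ 4 + X 1 ^ 4 + X 2 ^ 4 +
    X 0 ^ 2 * X 1 ^ 2 + X 1 ^ 2 * X 2 ^ 2 + X 2 ^ 2 * X 0 ^ 2 +
    X 0 ^ 2 * X 1 * X 2 + X 0 * X 1 ^ 2 * X 2 + X 0 * X 1 * X 2 ^ 2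

theorem stmt10_mul (M N : Matrix (Fin 3) (Fin 3) F2) (p : MvPolynomial (Fin 3) F2) :
    aeval (fun i => ∑ j, (M * N) j i • (X j : MvPolynomial (Fin 3) F2)) p =
      aeval (fun i => ∑ j, M j i • (X j : MvPolynomial (Fin 3) F2))
        (aeval (fun i => ∑ j, N j i • (X j : MvPolynomial (Fin 3) F2)) p) := by
  rw [← AlgHom.comp_apply]
  congr 1
  ext1 i
  simp only [aeval_X, AlgHom.comp_apply, map_sum, map_smul, Matrix.mul_apply, Finset.smul_sum,
    Finset.sum_smul, smul_smul]
  rw [Finset.sum_comm]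
  simp only [mul_comm]

theorem stmt10_one :
    aeval (fun i => ∑ j, (1 : Matrix (Fin 3) (Fin 3) F2) j i • (X j : MvPolynomial (Fin 3) F2)) CK
      = CK := by
  simp [Matrix.one_apply, ite_smul]

theorem stmt10_transv (i j : Fin 3) (hij : i ≠ j) :
    aeval (fun k => ∑ l, (Matrix.transvection i j (1 : F2)) l k •
      (X l : MvPolynomial (Fin 3) F2)) CK = CK := by
  have h2 : (2 : MvPolynomial (Fin 3) F2) = 0 := CharTwo.two_eq_zero
  unfold CK
  fin_cases i <;> fin_cases j <;>
    simp [Matrix.transvection, Fin.sum_univ_three, Matrix.one_apply, Matrix.single_apply] at hij ⊢ <;>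
    generalize (X 0 : MvPolynomial (Fin 3) F2) = x <;>
    generalize (X 1 : MvPolynomial (Fin 3) F2) = y <;>
    generalize (X 2 : MvPolynomial (Fin 3) F2) = z <;>
    grind

/-- The quartic `C_K` is invariant under `GL₃(𝔽₂)`: for every
`σ ∈ GL₃(𝔽₂)`, substituting the three linear forms given by `(x,y,z)·σ` for the variables
`(x,y,z)` in `C_K` returns `C_K`. -/
theorem stmt10 (σ : GL (Fin 3) F2) :
    aeval (fun i => ∑ j, (σ : Matrix (Fin 3) (Fin 3) F2) j i • X j) CK = CK := by
  have two : ∀ c : F2, c = 0 ∨ c = 1 := by decide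
  have hdet : (σ : Matrix (Fin 3) (Fin 3) F2).det ≠ 0 :=
    ((Matrix.isUnit_iff_isUnit_det _).1 σ.isUnit).ne_zero
  refine Matrix.diagonal_transvection_induction_of_det_ne_zero
    (fun M : Matrix (Fin 3) (Fin 3) F2 =>
      aeval (fun i => ∑ j, M j i • (X j : MvPolynomial (Fin 3) F2)) CK = CK) _ hdet ?_ ?_ ?_
  · intro D hD
    have : D = fun _ => 1 := by
      funext i
      rw [Matrix.det_diagonal] at hD
      exact (two (D i)).resolve_left (Finset.prod_ne_zero_iff.1 hD i (Finset.mem_univ i))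
    rw [this, Matrix.diagonal_one]
    exact stmt10_one
  · rintro ⟨i, j, hij, c⟩
    simp only [Matrix.TransvectionStruct.toMatrix_mk]
    rcases two c with rfl | rfl
    · rw [Matrix.transvection_zero]
      exact stmt10_one
    · exact stmt10_transv i j hij
  · intro A B _ _ hA hB
    rw [stmt10_mul, hB, hA]
end

section
/- The Hilbert series of S[W'^*]^G satisfies (Σ_{d≥0} dim_{F_2}(S[W'^*]^G_d)·t^d) · (1−t^2)·(1−t^3)^2·(1−t^4)·(1−t^6)·(1−t^7) = 1 + t^4 + 2t^5 + t^6 + t^7 + t^8 + 2t^9 + 2t^10 + t^11 + t^12 + t^13 + 2t^14 + t^15 + t^19, as an identity of formal power series in ℤ[[t]]. -/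
set_option synthInstance.maxHeartbeats 1000000
set_option maxHeartbeats 1000000

open MvPolynomial

/-- The matrix `D(A)` of the action on `W'^* = 𝔽₂⁶`. -/
def DA6 : Matrix (Fin 6) (Fin 6) F2 :=
  !![1,0,1,0,0,1; 0,1,0,0,0,0; 0,0,1,0,0,0; 0,0,0,1,1,0; 0,0,0,0,1,0; 0,0,0,0,0,1]

/-- The matrix `D(B)` of the action on `W'^* = 𝔽₂⁶`. -/
def DB6 : Matrix (Fin 6) (Fin 6) F2 :=
  !![0,0,1,0,0,0; 1,0,0,0,0,0; 0,1,0,0,0,0; 0,0,0,0,0,1; 0,0,0,1,0,0; 0,0,0,0,1,0]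

/-- The algebra endomorphism of `S[W'^*] = 𝔽₂[a,b,c,d,e,f]` induced by the right action of
`σ` on the linear forms (coefficient row vectors are multiplied on the right by `D σ`; in
particular the variable `Xᵢ` is sent to the linear form given by the `i`-th row of `D σ`). -/
noncomputable def polyAct (D : G3 →* GL (Fin 6) F2) (σ : G3) :
    MvPolynomial (Fin 6) F2 →ₐ[F2] MvPolynomial (Fin 6) F2 :=
  aeval (fun i => ∑ j, (D σ : Matrix (Fin 6) (Fin 6) F2) i j • X j)

/-- The invariant ring `S[W'^*]^H` for a subgroup `H ≤ G`. -/
noncomputable def invH (D : G3 →* GL (Fin 6) F2) (H : Subgroup G3) :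
    Subalgebra F2 (MvPolynomial (Fin 6) F2) where
  carrier := {p | ∀ σ ∈ H, polyAct D σ p = p}
  mul_mem' := fun ha hb σ hσ => by rw [map_mul, ha σ hσ, hb σ hσ]
  add_mem' := fun ha hb σ hσ => by rw [map_add, ha σ hσ, hb σ hσ]
  one_mem' := fun σ _ => map_one _
  zero_mem' := fun σ _ => map_zero _
  algebraMap_mem' := fun r σ _ => AlgHom.commutes _ r

/-- The invariant ring `S[W'^*]^G`. -/
noncomputable def invG (D : G3 →* GL (Fin 6) F2) :
    Subalgebra F2 (MvPolynomial (Fin 6) F2) :=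
  invH D ⊤

/-! ### The Fano plane action -/

def fvec (j : Fin 7) : Fin 3 → F2 := fun i => if (j.val + 1).testBit i.val then 1 else 0

def fcode (v : Fin 3 → F2) : ℕ := (v 0).val + 2 * (v 1).val + 4 * (v 2).val

def fidx (v : Fin 3 → F2) : Fin 7 := Fin.ofNat 7 (fcode v + 6)

lemma fidx_fvec : ∀ j, fidx (fvec j) = j := by decide
lemma fvec_fidx : ∀ v, v ≠ 0 → fvec (fidx v) = v := by decide
lemma fvec_ne : ∀ j, fvec j ≠ 0 := by decide

open Matrix in
lemma fvec_mul_ne (g : G3) (j : Fin 7) : fvec j ᵥ* g.val ≠ 0 := by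
  intro h
  apply fvec_ne j
  have : (fvec j ᵥ* g.val) ᵥ* (g⁻¹).val = 0 := by rw [h, Matrix.zero_vecMul]
  rwa [Matrix.vecMul_vecMul, ← Units.val_mul, mul_inv_cancel, Units.val_one,
    Matrix.vecMul_one] at this

open Matrix in
def fact (g : G3) (j : Fin 7) : Fin 7 := fidx (fvec j ᵥ* g.val)

open Matrix in
lemma fvec_fact (g : G3) (j : Fin 7) : fvec (fact g j) = fvec j ᵥ* g.val :=
  fvec_fidx _ (fvec_mul_ne g j)

lemma fact_mul (g h : G3) (j : Fin 7) : fact (g * h) j = fact h (fact g j) := by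
  rw [fact, Units.val_mul, ← Matrix.vecMul_vecMul, ← fvec_fact]; rfl

lemma fact_one (j : Fin 7) : fact 1 j = j := by
  rw [fact, Units.val_one, Matrix.vecMul_one, fidx_fvec]

def fperm (g : G3) : Equiv.Perm (Fin 7) where
  toFun := fact g
  invFun := fact g⁻¹
  left_inv j := by rw [← fact_mul, mul_inv_cancel, fact_one]
  right_inv j := by rw [← fact_mul, inv_mul_cancel, fact_one]

lemma fperm_apply (g : G3) (j) : fperm g j = fact g j := rfl

/-! ### Generation of GL₃(𝔽₂) -/

lemma Agen_Bgen_closure : Subgroup.closure {Agen, Bgen} = (⊤ : Subgroup G3) := by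
  set K := Subgroup.closure {Agen, Bgen} with hK
  have hA : Agen ∈ K := Subgroup.subset_closure (by simp)
  have hB : Bgen ∈ K := Subgroup.subset_closure (by simp)
  have h13 := hA
  have h21 : Bgen * Agen * Bgen⁻¹ ∈ K := K.mul_mem (K.mul_mem hB hA) (K.inv_mem hB)
  have h32 : Bgen⁻¹ * Agen * Bgen ∈ K := K.mul_mem (K.mul_mem (K.inv_mem hB) hA) hB
  have key : ∀ i j : Fin 3, i ≠ j → ∃ g ∈ K, g.val = Matrix.transvection i j (1 : F2) := by
    have h12 := K.mul_mem (K.mul_mem (K.mul_mem h13 h32) h13) h32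
    have h23 := K.mul_mem (K.mul_mem (K.mul_mem h21 h13) h21) h13
    have h31 := K.mul_mem (K.mul_mem (K.mul_mem h32 h21) h32) h21
    intro i j hij
    fin_cases i <;> fin_cases j <;> first
      | exact absurd rfl hij
      | exact ⟨_, h13, by decide⟩
      | exact ⟨_, h21, by decide⟩
      | exact ⟨_, h32, by decide⟩
      | exact ⟨_, h12, by decide⟩
      | exact ⟨_, h23, by decide⟩
      | exact ⟨_, h31, by decide⟩
  rw [eq_top_iff]
  rintro g -
  suffices h : ∃ k ∈ K, k.val = g.val by
    obtain ⟨k, hk, e⟩ := h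
    rwa [← Units.ext e]
  have hdet : g.val.det ≠ 0 := by
    have := g.isUnit.map (Matrix.detMonoidHom)
    exact this.ne_zero
  refine Matrix.diagonal_transvection_induction_of_det_ne_zero
    (fun M => ∃ k ∈ K, k.val = M) g.val hdet ?_ ?_ ?_
  · intro D hD
    refine ⟨1, K.one_mem, ?_⟩
    have : ∀ x : F2, x ≠ 0 → x = 1 := by decide
    rw [Matrix.det_diagonal, Finset.prod_ne_zero_iff] at hD
    rw [Units.val_one, ← Matrix.diagonal_one]
    congr 1
    ext i
    exact (this _ (hD i (Finset.mem_univ _))).symm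
  · rintro ⟨i, j, hij, c⟩
    have : ∀ x : F2, x = 0 ∨ x = 1 := by decide
    rcases this c with rfl | rfl
    · exact ⟨1, K.one_mem, by simp [Matrix.TransvectionStruct.toMatrix]⟩
    · exact key i j hij
  · rintro M N - - ⟨k, hk, rfl⟩ ⟨l, hl, rfl⟩
    exact ⟨k * l, K.mul_mem hk hl, rfl⟩

/-! ### Orbits on exponents -/

abbrev XX (d : ℕ) := {n : Fin 7 →₀ ℕ // n ∈ Finset.finsuppAntidiag (Finset.univ : Finset (Fin 7)) d}

lemma mem_XX (d : ℕ) (n : Fin 7 →₀ ℕ) :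
    n ∈ Finset.finsuppAntidiag (Finset.univ : Finset (Fin 7)) d ↔ ∑ i, n i = d := by
  simp [Finset.mem_finsuppAntidiag]

noncomputable def gact (g : G3) (n : Fin 7 →₀ ℕ) : Fin 7 →₀ ℕ := n.mapDomain (fperm g).symm

lemma gact_apply (g : G3) (n : Fin 7 →₀ ℕ) (j) : gact g n j = n (fact g j) := by
  rw [gact, Finsupp.mapDomain_equiv_apply]; rfl

noncomputable instance instXX (d : ℕ) : MulAction G3 (XX d) where
  smul g n := ⟨gact g n.1, by
    rw [mem_XX]
    have := (mem_XX d n.1).1 n.2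
    refine Eq.trans ?_ this
    simp_rw [gact_apply]
    exact Equiv.sum_comp (fperm g) (fun j => n.1 j)⟩
  one_smul n := Subtype.ext (Finsupp.ext fun j => by
    change gact 1 n.1 j = _
    rw [gact_apply, fact_one])
  mul_smul g h n := Subtype.ext (Finsupp.ext fun j => by
    change gact (g * h) n.1 j = gact g (gact h n.1) j
    rw [gact_apply, gact_apply, gact_apply, fact_mul])

lemma smul_XX (d : ℕ) (g : G3) (n : XX d) : (g • n).1 = gact g n.1 := rfl

noncomputable def invT (d : ℕ) : Submodule F2 (MvPolynomial (Fin 7) F2) where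
  carrier := {u | u.IsHomogeneous d ∧ ∀ g, rename (fperm g) u = u}
  add_mem' := fun ha hb => ⟨ha.1.add hb.1, fun g => by rw [map_add, ha.2, hb.2]⟩
  zero_mem' := ⟨isHomogeneous_zero _ _ _, fun g => map_zero _⟩
  smul_mem' := fun c u hu => ⟨(homogeneousSubmodule (Fin 7) F2 d).smul_mem c hu.1,
    fun g => by rw [map_smul, hu.2]⟩

lemma coeff_gact (u : MvPolynomial (Fin 7) F2) (g : G3) (n) :
    coeff (gact g n) u = coeff n (rename (fperm g) u) := by
  rw [← coeff_rename_mapDomain _ (fperm g).injective u (gact g n)]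
  congr 1
  ext j
  rw [Finsupp.mapDomain_equiv_apply, gact_apply, ← fperm_apply, Equiv.apply_symm_apply]

abbrev QQ' (d : ℕ) := MulAction.orbitRel.Quotient G3 (XX d)

lemma hom_iff (u : MvPolynomial (Fin 7) F2) (d : ℕ) :
    u.IsHomogeneous d ↔ ∀ n, coeff n u ≠ 0 → ∑ i, n i = d := by
  constructor
  · intro h n hn
    have := h hn
    rw [← this, Finsupp.weight_apply, Finsupp.sum_fintype _ _ (by simp)]
    simp
  · intro h n hn
    rw [← h n hn, Finsupp.weight_apply, Finsupp.sum_fintype _ _ (by simp)]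
    simp

open Classical in
noncomputable def invTequiv (d : ℕ) : invT d ≃ₗ[F2] (QQ' d → F2) where
  toFun u := fun q => Quotient.liftOn' q (fun n => coeff n.1 u.1) (by
    rintro a b ⟨g, rfl⟩
    change coeff (gact g b.1) u.1 = coeff b.1 u.1
    rw [coeff_gact, u.2.2 g])
  map_add' u v := by
    ext q; induction q using Quotient.inductionOn'; simp
  map_smul' c u := by
    ext q; induction q using Quotient.inductionOn'; simp
  invFun φ := ⟨∑ n : XX d, monomial n.1 (φ (Quotient.mk'' n)), by
    have hc : ∀ m, coeff m (∑ n : XX d, monomial n.1 (φ (Quotient.mk'' n))) =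
        if h : m ∈ Finset.finsuppAntidiag (Finset.univ : Finset (Fin 7)) d then
          φ (Quotient.mk'' ⟨m, h⟩) else 0 := by
      intro m
      rw [coeff_sum]
      simp only [coeff_monomial]
      split_ifs with h
      · rw [Finset.sum_eq_single ⟨m, h⟩]
        · simp
        · intro b _ hb
          rw [if_neg]
          rintro rfl
          exact hb rfl
        · simp
      · apply Finset.sum_eq_zero
        intro b _
        rw [if_neg]
        rintro rfl
        exact h b.2
    constructor
    · rw [hom_iff]
      intro n hn
      rw [hc] at hn
      split_ifs at hn with h
      · exact (mem_XX _ _).1 h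
      · exact absurd rfl hn
    · intro g
      ext m
      rw [← coeff_gact, hc, hc]
      have e : gact g m ∈ Finset.finsuppAntidiag (Finset.univ : Finset (Fin 7)) d ↔
          m ∈ Finset.finsuppAntidiag (Finset.univ : Finset (Fin 7)) d := by
        rw [mem_XX, mem_XX]
        simp_rw [gact_apply]
        rw [← Equiv.sum_comp (fperm g) (fun j => m j)]
        rfl
      by_cases h : m ∈ Finset.finsuppAntidiag (Finset.univ : Finset (Fin 7)) d
      · rw [dif_pos h, dif_pos (e.2 h)]
        congr 1
        exact Quotient.sound' ⟨g, rfl⟩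
      · rw [dif_neg h, dif_neg (fun h' => h (e.1 h'))]⟩
  left_inv u := by
    apply Subtype.ext
    ext m
    simp only [coeff_sum, coeff_monomial, Quotient.liftOn'_mk'']
    by_cases h : coeff m u.1 = 0
    · rw [h]
      apply Finset.sum_eq_zero
      intro b _
      split_ifs with hb
      · rw [hb, h]
      · rfl
    · have hm := (mem_XX d m).2 ((hom_iff u.1 d).1 u.2.1 m h)
      rw [Finset.sum_eq_single ⟨m, hm⟩]
      · simp
      · intro b _ hb
        rw [if_neg]
        rintro rfl
        exact hb rfl
      · simp
  right_inv φ := by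
    ext q
    induction q using Quotient.inductionOn' with
    | h m =>
    simp only [coeff_sum, coeff_monomial, Quotient.liftOn'_mk'']
    rw [Finset.sum_eq_single m]
    · simp
    · intro b _ hb
      rw [if_neg]
      intro h
      exact hb (Subtype.ext h)
    · simp

lemma finrank_invT (d : ℕ) : Module.finrank F2 (invT d) = Nat.card (QQ' d) := by
  classical
  have : Finite (QQ' d) := Quotient.finite _
  have := Fintype.ofFinite (QQ' d)
  rw [(invTequiv d).finrank_eq, Module.finrank_fintype_fun_eq_card, Nat.card_eq_fintype_card]

instance finite_invT (d : ℕ) : Module.Finite F2 (invT d) := by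
  have : Finite (QQ' d) := Quotient.finite _
  exact Module.Finite.equiv (invTequiv d).symm

lemma card_G3 : Fintype.card G3 = 168 := by
  rw [← Nat.card_eq_fintype_card, Matrix.card_GL_field]
  simp [Fin.prod_univ_three, ZMod.card]

lemma burnside (d : ℕ) :
    ∑ g : G3, Nat.card (MulAction.fixedBy (XX d) g) = Nat.card (QQ' d) * 168 := by
  classical
  have : Finite (QQ' d) := Quotient.finite _
  have := Fintype.ofFinite (QQ' d)
  rw [← card_G3, Nat.card_eq_fintype_card,
    ← MulAction.sum_card_fixedBy_eq_card_orbits_mul_card_group]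
  simp [Nat.card_eq_fintype_card]

/-! ### Counting fixed points -/

def sg (u v w : Fin 8) (j : Fin 7) : Fin 7 :=
  Fin.ofNat 7 (((if (j.val + 1).testBit 0 then u.val else 0) ^^^
    ((if (j.val + 1).testBit 1 then v.val else 0) ^^^
      (if (j.val + 1).testBit 2 then w.val else 0))) + 6)

def vec8 (c : Fin 8) : Fin 3 → F2 := fun i => if c.val.testBit i.val then 1 else 0
def code8 (v : Fin 3 → F2) : Fin 8 := Fin.ofNat 8 (fcode v)

lemma vec8_code8 : ∀ v, vec8 (code8 v) = v := by decide
lemma fcode_code8 : ∀ v, (code8 v).val = fcode v := by decide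
lemma fcode_add : ∀ v w, fcode (v + w) = fcode v ^^^ fcode w := by decide +kernel
lemma fcode_smul : ∀ (c : Bool) (v : Fin 3 → F2),
    fcode ((if c = true then (1 : F2) else 0) • v) = if c = true then fcode v else 0 := by
  decide +kernel

def rc (g : G3) (i : Fin 3) : Fin 8 := code8 (g.val i)

lemma fact_eq (g : G3) (j : Fin 7) : fact g j = sg (rc g 0) (rc g 1) (rc g 2) j := by
  rw [fact, fidx, sg, Matrix.vecMul_eq_sum, Fin.sum_univ_three, add_assoc, fcode_add, fcode_add]
  unfold fvec
  rw [fcode_smul, fcode_smul, fcode_smul]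
  simp only [rc, fcode_code8]
  rfl

def okk (t : Fin 8 × Fin 8 × Fin 8) : Bool :=
  t.1 != 0 && t.2.1 != 0 && t.2.2 != 0 && t.1 != t.2.1 && t.1 != t.2.2 && t.2.1 != t.2.2 &&
    (t.1.val ^^^ t.2.1.val) != t.2.2.val

def okset : Finset (Fin 8 × Fin 8 × Fin 8) := Finset.univ.filter (fun t => okk t = true)

lemma det_ok : ∀ u v w : Fin 8,
    vec8 u 0 * vec8 v 1 * vec8 w 2 - vec8 u 0 * vec8 v 2 * vec8 w 1 - vec8 u 1 * vec8 v 0 * vec8 w 2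
    + vec8 u 1 * vec8 v 2 * vec8 w 0 + vec8 u 2 * vec8 v 0 * vec8 w 1
    - vec8 u 2 * vec8 v 1 * vec8 w 0 ≠ 0 → okk (u, v, w) = true := by
  decide +kernel

def rc3 (g : G3) : Fin 8 × Fin 8 × Fin 8 := (rc g 0, rc g 1, rc g 2)

lemma rc3_ok (g : G3) : rc3 g ∈ okset := by
  have hdet : g.val.det ≠ 0 := (g.isUnit.map (Matrix.detMonoidHom)).ne_zero
  rw [Matrix.det_fin_three] at hdet
  simp only [okset, Finset.mem_filter, Finset.mem_univ, true_and]
  apply det_ok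
  simp only [rc, vec8_code8]
  exact hdet

lemma rc3_inj : Function.Injective rc3 := by
  intro g h e
  simp only [rc3, Prod.mk.injEq, rc] at e
  apply Units.ext
  funext i
  have : ∀ i, code8 (g.val i) = code8 (h.val i) := by
    intro i; fin_cases i
    · exact e.1
    · exact e.2.1
    · exact e.2.2
  have := congrArg vec8 (this i)
  rwa [vec8_code8, vec8_code8] at this

lemma okset_card : okset.card = 168 := by decide +kernel

lemma okset_eq : Finset.univ.image rc3 = okset := by
  apply Finset.eq_of_subset_of_card_le
  · exact Finset.image_subset_iff.2 fun g _ => rc3_ok g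
  · rw [Finset.card_image_of_injective _ rc3_inj, Finset.card_univ, card_G3, okset_card]

/-- orbit representative -/
def orep (f : Fin 7 → Fin 7) (x : Fin 7) : Fin 7 :=
  min x (min (f x) (min (f (f x)) (min (f (f (f x))) (min (f (f (f (f x))))
    (min (f (f (f (f (f x))))) (f (f (f (f (f (f x))))))))))) 

def osz (f : Fin 7 → Fin 7) (y : Fin 7) : ℕ := (Finset.univ.filter (fun x => orep f x = y)).card

def oR (f : Fin 7 → Fin 7) : Finset (Fin 7) := Finset.univ.filter (fun x => orep f x = x)

def fixn (f : Fin 7 → Fin 7) : ℕ := (Finset.univ.filter (fun x => f x = x)).card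

def cls (f : Fin 7 → Fin 7) : Fin 5 :=
  match fixn f with
  | 7 => 0
  | 3 => 1
  | 1 => if f (f (f 0)) = 0 ∧ f (f (f 1)) = 1 then 2 else 3
  | _ => 4

def tab : Fin 5 → List ℕ := ![[1,1,1,1,1,1,1],[1,1,1,2,2],[1,3,3],[1,2,4],[7]]

def ncl : Fin 5 → ℕ := ![1,21,56,42,48]

lemma cls_count : ∀ i, (okset.filter (fun t => cls (sg t.1 t.2.1 t.2.2) = i)).card = ncl i := by
  decide +kernel

lemma orep_ok : ∀ u v w : Fin 8, okk (u, v, w) = true →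
    ∀ x, orep (sg u v w) (sg u v w x) = orep (sg u v w) x := by
  decide +kernel

lemma osz_ok : ∀ u v w : Fin 8, okk (u, v, w) = true →
    (oR (sg u v w)).val.map (osz (sg u v w)) = (tab (cls (sg u v w)) : Multiset ℕ) := by
  decide +kernel

lemma orep_mem (f : Fin 7 → Fin 7) (x : Fin 7) : ∃ k, f^[k] x = orep f x := by
  have hm : ∀ a b : Fin 7, (∃ k, f^[k] x = a) → (∃ k, f^[k] x = b) → ∃ k, f^[k] x = min a b := by
    intro a b ha hb
    rcases min_choice a b with h | h <;> rw [h] <;> assumption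
  unfold orep
  exact hm _ _ ⟨0, rfl⟩ <| hm _ _ ⟨1, rfl⟩ <| hm _ _ ⟨2, rfl⟩ <| hm _ _ ⟨3, rfl⟩ <|
    hm _ _ ⟨4, rfl⟩ <| hm _ _ ⟨5, rfl⟩ ⟨6, rfl⟩

/-- geometric series -/
noncomputable def geo (k : ℕ) : PowerSeries ℤ := PowerSeries.mk fun d => if k ∣ d then 1 else 0

lemma geo_mul (k : ℕ) (hk : 0 < k) : geo k * (1 - PowerSeries.X ^ k) = 1 := by
  ext d
  rw [mul_sub, mul_one, map_sub, PowerSeries.coeff_mul_X_pow', geo, PowerSeries.coeff_mk,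
    PowerSeries.coeff_one]
  by_cases h0 : d = 0
  · subst h0; simp; omega
  · rw [if_neg h0]
    by_cases h : k ≤ d
    · rw [if_pos h, PowerSeries.coeff_mk]
      have : k ∣ d - k ↔ k ∣ d := by
        constructor
        · intro hh
          have := dvd_add hh (dvd_refl k)
          rwa [Nat.sub_add_cancel h] at this
        · intro hh; exact Nat.dvd_sub hh (dvd_refl k)
      simp [this]
    · rw [if_neg h, if_neg]
      · rfl
      · intro hd; exact h (Nat.le_of_dvd (Nat.pos_of_ne_zero h0) hd)

lemma fix_iff (f : Fin 7 → Fin 7) (h1 : ∀ x, orep f (f x) = orep f x) (n : Fin 7 → ℕ) :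
    (∀ x, n (f x) = n x) ↔ ∀ x, n (orep f x) = n x := by
  constructor
  · intro h x
    obtain ⟨k, hk⟩ := orep_mem f x
    rw [← hk]
    clear hk
    induction k with
    | zero => rfl
    | succ k ih => rw [Function.iterate_succ_apply', h, ih]
  · intro h x
    rw [← h (f x), h1, h]

lemma orep_orep (f : Fin 7 → Fin 7) (h1 : ∀ x, orep f (f x) = orep f x) (x) :
    orep f (orep f x) = orep f x := by
  obtain ⟨k, hk⟩ := orep_mem f x
  rw [← hk]
  have : ∀ k, orep f (f^[k] x) = orep f x := by
    intro k
    induction k with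
    | zero => rfl
    | succ k ih => rw [Function.iterate_succ_apply', h1, ih]
  rw [this, hk]

lemma osz_pos (f : Fin 7 → Fin 7) (y) (hy : y ∈ oR f) : 0 < osz f y := by
  apply Finset.card_pos.2
  exact ⟨y, by simpa [oR] using hy⟩

lemma sum_fix (f : Fin 7 → Fin 7) (h1 : ∀ x, orep f (f x) = orep f x) (n : Fin 7 → ℕ) 
    (h : ∀ x, n (orep f x) = n x) : ∑ x, n x = ∑ y ∈ oR f, osz f y * n y := by
  rw [← Finset.sum_fiberwise_of_maps_to (s := Finset.univ) (t := oR f) (g := orep f)]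
  · apply Finset.sum_congr rfl
    intro y hy
    rw [osz, Finset.card_eq_sum_ones, Finset.sum_mul]
    apply Finset.sum_congr rfl
    intro x hx
    simp only [Finset.mem_filter, Finset.mem_univ, true_and] at hx
    rw [one_mul, ← hx, h]
  · intro x _
    simp [oR, orep_orep f h1]

open Classical in
lemma count_fix (f : Fin 7 → Fin 7) (h1 : ∀ x, orep f (f x) = orep f x) (d : ℕ) :
    (((Finset.finsuppAntidiag (Finset.univ : Finset (Fin 7)) d).filter
      (fun n => ∀ x, n (f x) = n x)).card : ℤ) =
    PowerSeries.coeff d (∏ y ∈ oR f, geo (osz f y)) := by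
  rw [PowerSeries.coeff_prod]
  simp only [geo, PowerSeries.coeff_mk]
  have hp : ∀ l : Fin 7 →₀ ℕ, (∏ y ∈ oR f, if osz f y ∣ l y then (1 : ℤ) else 0) =
      if ∀ y ∈ oR f, osz f y ∣ l y then 1 else 0 := by
    intro l
    rw [Finset.prod_ite_zero]
    simp
  simp only [hp]
  rw [Finset.sum_ite, Finset.sum_const_zero, add_zero, Finset.sum_const, nsmul_eq_mul, mul_one]
  congr 1
  refine Finset.card_bij'
    (fun n _ => Finsupp.equivFunOnFinite.symm (fun y => if y ∈ oR f then osz f y * n y else 0))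
    (fun l _ => Finsupp.equivFunOnFinite.symm (fun x => l (orep f x) / osz f (orep f x)))
    ?_ ?_ ?_ ?_
  · intro n hn
    simp only [Finset.mem_filter, mem_XX] at hn
    have hn2 := (fix_iff f h1 n).1 hn.2
    simp only [Finset.mem_filter, Finset.mem_finsuppAntidiag]
    refine ⟨⟨?_, ?_⟩, ?_⟩
    · rw [← hn.1, sum_fix f h1 n hn2]
      apply Finset.sum_congr rfl
      intro y hy
      simp [hy]
    · intro y hy
      by_contra hc
      simp [hc] at hy
    · intro y hy
      simp [hy]
  · intro l hl
    simp only [Finset.mem_filter, Finset.mem_finsuppAntidiag] at hl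
    simp only [Finset.mem_filter, mem_XX]
    have h2 : ∀ x, orep f (orep f x) = orep f x := orep_orep f h1
    constructor
    · rw [sum_fix f h1 _ (by intro x; simp [h2]), ← hl.1.1]
      apply Finset.sum_congr rfl
      intro y hy
      have hy' : orep f y = y := by simpa [oR] using hy
      simp [hy', Nat.mul_div_cancel' (hl.2 y hy)]
    · intro x; simp [h1]
  · intro n hn
    simp only [Finset.mem_filter, mem_XX] at hn
    have hn2 := (fix_iff f h1 n).1 hn.2
    ext x
    have hm : orep f x ∈ oR f := by simp [oR, orep_orep f h1]
    simp [hm, Nat.mul_div_cancel_left _ (osz_pos f _ hm), hn2]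
  · intro l hl
    simp only [Finset.mem_filter, Finset.mem_finsuppAntidiag] at hl
    ext y
    by_cases hy : y ∈ oR f
    · have hy' : orep f y = y := by simpa [oR] using hy
      simp [hy, hy', Nat.mul_div_cancel' (hl.2 y hy)]
    · have : l y = 0 := by
        by_contra hc
        exact hy (hl.1.2 (Finsupp.mem_support_iff.2 hc))
      simp [hy, this]

noncomputable def FF (i : Fin 5) : PowerSeries ℤ := ((tab i).map geo).prod

lemma card_fixedBy (d : ℕ) (g : G3) :
    (Nat.card (MulAction.fixedBy (XX d) g) : ℤ) =
      PowerSeries.coeff d (FF (cls (sg (rc g 0) (rc g 1) (rc g 2)))) := by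
  classical
  have hok : okk (rc g 0, rc g 1, rc g 2) = true := by
    have := rc3_ok g
    simpa [okset, rc3] using this
  have h1 := orep_ok _ _ _ hok
  have h2 := osz_ok _ _ _ hok
  set f := sg (rc g 0) (rc g 1) (rc g 2) with hf
  have hFF : FF (cls f) = ∏ y ∈ oR f, geo (osz f y) := by
    rw [FF, ← Multiset.prod_coe, ← Multiset.map_coe, ← h2, Multiset.map_map]
    rfl
  rw [hFF, ← count_fix f h1 d, Nat.cast_inj, ← Nat.card_eq_finsetCard]
  have key : ∀ n : XX d, n ∈ MulAction.fixedBy (XX d) g ↔ ∀ x, n.1 (f x) = n.1 x := by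
    intro n
    rw [MulAction.mem_fixedBy]
    constructor
    · intro h x
      have h' := congrArg (fun m : XX d => m.1 x) h
      simp only [smul_XX, gact_apply, fact_eq] at h'
      exact h'
    · intro h
      apply Subtype.ext
      ext x
      rw [smul_XX, gact_apply, fact_eq]
      exact h x
  refine Nat.card_congr ⟨fun n => ⟨n.1.1, Finset.mem_filter.2 ⟨n.1.2, (key n.1).1 n.2⟩⟩,
    fun n => ⟨⟨n.1, (Finset.mem_filter.1 n.2).1⟩, (key _).2 (Finset.mem_filter.1 n.2).2⟩,
    fun _ => rfl, fun _ => rfl⟩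

lemma sum_FF (d : ℕ) :
    (Nat.card (QQ' d) : ℤ) * 168 = PowerSeries.coeff d (∑ i, (ncl i : PowerSeries ℤ) * FF i) := by
  classical
  have := congrArg (Nat.cast (R := ℤ)) (burnside d)
  push_cast at this
  rw [← this]
  simp_rw [card_fixedBy]
  rw [← map_sum]
  refine congrArg _ ?_
  have e1 : ∑ g : G3, FF (cls (sg (rc g 0) (rc g 1) (rc g 2))) =
      ∑ t ∈ okset, FF (cls (sg t.1 t.2.1 t.2.2)) := by
    rw [← okset_eq, Finset.sum_image (fun a _ b _ h => rc3_inj h)]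
    rfl
  rw [e1, ← Finset.sum_fiberwise_of_maps_to (s := okset) (t := Finset.univ)
    (g := fun t => cls (sg t.1 t.2.1 t.2.2)) (fun _ _ => Finset.mem_univ _)]
  apply Finset.sum_congr rfl
  intro i _
  rw [← cls_count i, ← nsmul_eq_mul, ← Finset.sum_const]
  apply Finset.sum_congr rfl
  intro t ht
  rw [(Finset.mem_filter.1 ht).2]

/-! ### Comparing the two polynomial rings -/

abbrev SS := MvPolynomial (Fin 6) F2
abbrev TT := MvPolynomial (Fin 7) F2

noncomputable def ee : TT := X 0 + X 1 + X 2 + X 3 + X 4 + X 5 + X 6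

noncomputable def pif : Fin 7 → SS :=
  ![X 0, X 1, X 0 + X 1 + X 3, X 2, X 0 + X 2 + X 5, X 1 + X 2 + X 4,
    X 0 + X 1 + X 2 + X 3 + X 4 + X 5]

noncomputable def iof : Fin 6 → TT :=
  ![X 0 + ee, X 1 + ee, X 3 + ee, X 0 + X 1 + X 2 + ee, X 1 + X 3 + X 5 + ee, X 0 + X 3 + X 4 + ee]

noncomputable def ppi : TT →ₐ[F2] SS := aeval pif
noncomputable def iio : SS →ₐ[F2] TT := aeval iof

lemma two_SS : (2 : SS) = 0 := by
  have : (2 : SS) = C (2 : F2) := (map_ofNat C 2).symm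
  rw [this, show (2 : F2) = 0 from rfl, C_0]
lemma two_TT : (2 : TT) = 0 := by
  have : (2 : TT) = C (2 : F2) := (map_ofNat C 2).symm
  rw [this, show (2 : F2) = 0 from rfl, C_0]

lemma ppi_ee : ppi ee = 0 := by
  simp only [ppi, ee, map_add, aeval_X, pif]
  simp
  linear_combination (2 * X 0 + 2 * X 1 + 2 * X 2 + X 3 + X 4 + X 5) * two_SS

lemma ppi_iio (p : SS) : ppi (iio p) = p := by
  have : ppi.comp iio = AlgHom.id F2 SS := by
    apply algHom_ext
    intro i
    simp only [AlgHom.comp_apply, iio, aeval_X, AlgHom.id_apply]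
    fin_cases i <;> simp [iof, ppi_ee] <;> simp [ppi, pif] <;> grind [two_SS]
  exact DFunLike.congr_fun this p

lemma ee_dvd (u : TT) : ee ∣ u - iio (ppi u) := by
  rw [← Ideal.mem_span_singleton, ← Ideal.Quotient.eq]
  have : (Ideal.Quotient.mkₐ F2 (Ideal.span {ee})) =
      (Ideal.Quotient.mkₐ F2 (Ideal.span {ee})).comp (iio.comp ppi) := by
    apply algHom_ext
    intro i
    simp only [AlgHom.comp_apply, Ideal.Quotient.mkₐ_eq_mk]
    rw [Ideal.Quotient.eq, Ideal.mem_span_singleton]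
    have h : ∃ k : TT, X i - iio (ppi (X i)) = ee * k := by
      simp only [ppi, aeval_X]
      fin_cases i
      · refine ⟨1, ?_⟩
        simp [pif, iio, iof]; grind [two_TT]
      · refine ⟨1, ?_⟩
        simp [pif, iio, iof]; grind [two_TT]
      · refine ⟨1, ?_⟩
        simp [pif, iio, iof]; grind [two_TT]
      · refine ⟨1, ?_⟩
        simp [pif, iio, iof]; grind [two_TT]
      · refine ⟨1, ?_⟩
        simp [pif, iio, iof]; grind [two_TT]
      · refine ⟨1, ?_⟩
        simp [pif, iio, iof]; grind [two_TT]
      · refine ⟨1, ?_⟩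
        simp [pif, iio, iof, ee]; grind [two_TT]
    exact h.imp fun _ h => h
  exact DFunLike.congr_fun this u

lemma fA : ∀ j, fperm Agen j = ![4, 1, 6, 3, 0, 5, 2] j := by decide
lemma fB : ∀ j, fperm Bgen j = ![3, 0, 4, 1, 5, 2, 6] j := by decide

lemma pA (D : G3 →* GL (Fin 6) F2) (hA : (D Agen : Matrix (Fin 6) (Fin 6) F2) = DA6) (i) :
    polyAct D Agen (X i) = (![X 0 + X 2 + X 5, X 1, X 2, X 3 + X 4, X 4, X 5] : Fin 6 → SS) i := by
  rw [polyAct, aeval_X, hA, Fin.sum_univ_six]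
  fin_cases i <;> simp [DA6]

lemma pB (D : G3 →* GL (Fin 6) F2) (hB : (D Bgen : Matrix (Fin 6) (Fin 6) F2) = DB6) (i) :
    polyAct D Bgen (X i) = (![X 2, X 0, X 1, X 5, X 3, X 4] : Fin 6 → SS) i := by
  rw [polyAct, aeval_X, hB, Fin.sum_univ_six]
  fin_cases i <;> simp [DB6]

lemma ren_ee (g : G3) : rename (fperm g) ee = ee := by
  have h : ee = ∑ i, X i := by rw [ee, Fin.sum_univ_seven]
  rw [h, map_sum]
  simp only [rename_X]
  exact Equiv.sum_comp (fperm g) (fun j => (X j : TT))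

lemma ppi_A (D : G3 →* GL (Fin 6) F2) (hA : (D Agen : Matrix (Fin 6) (Fin 6) F2) = DA6) (u : TT) :
    ppi (rename (fperm Agen) u) = polyAct D Agen (ppi u) := by
  have : ppi.comp (rename (fperm Agen)) = (polyAct D Agen).comp ppi := by
    apply algHom_ext
    intro i
    simp only [AlgHom.comp_apply, rename_X, fA, ppi, aeval_X]
    fin_cases i <;> simp [pif, pA D hA] <;> grind [two_SS]
  exact DFunLike.congr_fun this u

lemma ppi_B (D : G3 →* GL (Fin 6) F2) (hB : (D Bgen : Matrix (Fin 6) (Fin 6) F2) = DB6) (u : TT) :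
    ppi (rename (fperm Bgen) u) = polyAct D Bgen (ppi u) := by
  have : ppi.comp (rename (fperm Bgen)) = (polyAct D Bgen).comp ppi := by
    apply algHom_ext
    intro i
    simp only [AlgHom.comp_apply, rename_X, fB, ppi, aeval_X]
    fin_cases i <;> simp [pif, pB D hB] <;> grind [two_SS]
  exact DFunLike.congr_fun this u

lemma iio_A (D : G3 →* GL (Fin 6) F2) (hA : (D Agen : Matrix (Fin 6) (Fin 6) F2) = DA6) (p : SS) :
    iio (polyAct D Agen p) = rename (fperm Agen) (iio p) := by
  have : iio.comp (polyAct D Agen) = (rename (fperm Agen)).comp iio := by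
    apply algHom_ext
    intro i
    simp only [AlgHom.comp_apply, pA D hA]
    fin_cases i <;> simp [iio, iof, fA, ren_ee] <;> grind [two_TT, ee]
  exact DFunLike.congr_fun this p

lemma iio_B (D : G3 →* GL (Fin 6) F2) (hB : (D Bgen : Matrix (Fin 6) (Fin 6) F2) = DB6) (p : SS) :
    iio (polyAct D Bgen p) = rename (fperm Bgen) (iio p) := by
  have : iio.comp (polyAct D Bgen) = (rename (fperm Bgen)).comp iio := by
    apply algHom_ext
    intro i
    simp only [AlgHom.comp_apply, pB D hB]
    fin_cases i <;> simp [iio, iof, fB, ren_ee] <;> grind [two_TT, ee]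
  exact DFunLike.congr_fun this p

lemma polyAct_mul (D : G3 →* GL (Fin 6) F2) (g h : G3) (p : SS) :
    polyAct D (g * h) p = polyAct D h (polyAct D g p) := by
  have : polyAct D (g * h) = (polyAct D h).comp (polyAct D g) := by
    apply algHom_ext
    intro i
    simp only [AlgHom.comp_apply, polyAct, aeval_X, map_sum, map_smul, map_mul, Units.val_mul,
      Matrix.mul_apply, Finset.smul_sum, Finset.sum_smul, smul_smul]
    rw [Finset.sum_comm]
  exact DFunLike.congr_fun this p

lemma polyAct_one (D : G3 →* GL (Fin 6) F2) (p : SS) : polyAct D 1 p = p := by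
  have : polyAct D 1 = AlgHom.id F2 SS := by
    apply algHom_ext
    intro i
    simp [polyAct, Matrix.one_apply]
  exact DFunLike.congr_fun this p

lemma mem_invG (D : G3 →* GL (Fin 6) F2) (p : SS) :
    p ∈ invG D ↔ polyAct D Agen p = p ∧ polyAct D Bgen p = p := by
  constructor
  · intro h
    exact ⟨h _ trivial, h _ trivial⟩
  · rintro ⟨h1, h2⟩ σ -
    let K : Subgroup G3 :=
      { carrier := {g | polyAct D g p = p}
        mul_mem' := fun {a b} ha hb => by
          change polyAct D (a * b) p = p
          rw [polyAct_mul, ha, hb]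
        one_mem' := polyAct_one D p
        inv_mem' := fun {a} ha => by
          change polyAct D a⁻¹ p = p
          have ha' : polyAct D a p = p := ha
          calc polyAct D a⁻¹ p = polyAct D a⁻¹ (polyAct D a p) := by rw [ha']
            _ = p := by rw [← polyAct_mul, mul_inv_cancel, polyAct_one] }
    have : Subgroup.closure {Agen, Bgen} ≤ K := by
      rw [Subgroup.closure_le]
      rintro g (rfl | rfl)
      · exact h1
      · exact h2
    rw [Agen_Bgen_closure] at this
    exact this (Subgroup.mem_top σ)

lemma mem_invT (d : ℕ) (u : TT) :
    u ∈ invT d ↔ u.IsHomogeneous d ∧ rename (fperm Agen) u = u ∧ rename (fperm Bgen) u = u := by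
  constructor
  · intro h
    exact ⟨h.1, h.2 _, h.2 _⟩
  · rintro ⟨h0, h1, h2⟩
    refine ⟨h0, fun σ => ?_⟩
    have hm : ∀ (a b : G3) (v : TT), rename (fperm (a * b)) v =
        rename (fperm b) (rename (fperm a) v) := by
      intro a b v
      rw [rename_rename]
      congr 2
      funext j
      exact fact_mul a b j
    have ho : ∀ v : TT, rename (fperm 1) v = v := by
      intro v
      have : (fperm 1 : Fin 7 → Fin 7) = id := by funext j; exact fact_one j
      rw [this, rename_id_apply]
    let K : Subgroup G3 :=
      { carrier := {g | rename (fperm g) u = u}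
        mul_mem' := fun {a b} ha hb => by
          change rename (fperm (a * b)) u = u
          rw [hm, ha, hb]
        one_mem' := ho u
        inv_mem' := fun {a} ha => by
          change rename (fperm a⁻¹) u = u
          have ha' : rename (fperm a) u = u := ha
          calc rename (fperm a⁻¹) u = rename (fperm a⁻¹) (rename (fperm a) u) := by rw [ha']
            _ = u := by rw [← hm, mul_inv_cancel, ho] }
    have : Subgroup.closure {Agen, Bgen} ≤ K := by
      rw [Subgroup.closure_le]
      rintro g (rfl | rfl)
      · exact h1
      · exact h2
    rw [Agen_Bgen_closure] at this
    exact this (Subgroup.mem_top σ)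

lemma ee_hom : ee.IsHomogeneous 1 := by
  unfold ee
  repeat' apply IsHomogeneous.add
  all_goals exact isHomogeneous_X _ _

lemma iio_hom (d : ℕ) (p : SS) (hp : p.IsHomogeneous d) : (iio p).IsHomogeneous d := by
  have := hp.aeval iof (n := 1) (by
    intro i
    fin_cases i <;> simp only [iof] <;>
    · simp
      repeat' apply IsHomogeneous.add
      all_goals first | exact isHomogeneous_X _ _ | exact ee_hom)
  rwa [one_mul] at this

lemma ppi_hom (d : ℕ) (p : TT) (hp : p.IsHomogeneous d) : (ppi p).IsHomogeneous d := by
  have := hp.aeval pif (n := 1) (by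
    intro i
    fin_cases i <;> simp only [pif] <;>
    · simp
      repeat' apply IsHomogeneous.add
      all_goals exact isHomogeneous_X _ _)
  rwa [one_mul] at this

lemma ee_ne : ee ≠ 0 := by
  intro h
  have := congrArg (MvPolynomial.eval (fun i => if i = 0 then (1 : F2) else 0)) h
  simp [ee] at this

lemma comp_ee (d : ℕ) (w : TT) :
    homogeneousComponent (d + 1) (ee * w) = ee * homogeneousComponent d w := by
  conv_lhs => rw [← sum_homogeneousComponent w, Finset.mul_sum, map_sum]
  have : ∀ i, homogeneousComponent (d + 1) (ee * homogeneousComponent i w) =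
      if i = d then ee * homogeneousComponent i w else 0 := by
    intro i
    rw [homogeneousComponent_of_mem (m := d + 1) (n := i + 1)]
    · simp only [Nat.add_right_cancel_iff, eq_comm]
    · have := ee_hom.mul (homogeneousComponent_isHomogeneous i w)
      rwa [add_comm] at this
  simp only [this]
  rw [Finset.sum_ite_eq']
  split_ifs with h
  · rfl
  · rw [homogeneousComponent_eq_zero, mul_zero]
    simp at h; omega

noncomputable abbrev UU (D : G3 →* GL (Fin 6) F2) (d : ℕ) : Submodule F2 SS :=
  (invG D).toSubmodule ⊓ homogeneousSubmodule (Fin 6) F2 d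

lemma mem_UU (D : G3 →* GL (Fin 6) F2) (d : ℕ) (p : SS) : p ∈ UU D d ↔
    p.IsHomogeneous d ∧ polyAct D Agen p = p ∧ polyAct D Bgen p = p := by
  rw [Submodule.mem_inf, mem_homogeneousSubmodule, Subalgebra.mem_toSubmodule, mem_invG, and_comm]

section
variable (D : G3 →* GL (Fin 6) F2)
    (hA : (D Agen : Matrix (Fin 6) (Fin 6) F2) = DA6)
    (hB : (D Bgen : Matrix (Fin 6) (Fin 6) F2) = DB6)
include hA hB

lemma iio_mem (d : ℕ) (p : SS) (hp : p ∈ UU D d) : iio p ∈ invT d := by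
  rw [mem_UU] at hp
  rw [mem_invT, ← iio_A D hA, ← iio_B D hB, hp.2.1, hp.2.2]
  exact ⟨iio_hom d p hp.1, rfl, rfl⟩

lemma ppi_mem (d : ℕ) (u : TT) (hu : u ∈ invT d) : ppi u ∈ UU D d := by
  rw [mem_invT] at hu
  rw [mem_UU, ← ppi_A D hA, ← ppi_B D hB, hu.2.1, hu.2.2]
  exact ⟨ppi_hom d u hu.1, rfl, rfl⟩

lemma ee_mem (d : ℕ) (u : TT) (hu : u ∈ invT d) : ee * u ∈ invT (d + 1) := by
  refine ⟨?_, fun g => ?_⟩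
  · rw [add_comm]; exact ee_hom.mul hu.1
  · rw [map_mul, ren_ee, hu.2]

lemma iio_inj : Function.Injective iio := Function.LeftInverse.injective ppi_iio

lemma finite_UU (d : ℕ) : Module.Finite F2 (UU D d) := by
  let f : UU D d →ₗ[F2] invT d :=
    (iio.toLinearMap.restrict (fun p hp => iio_mem D hA hB d p hp))
  apply Module.Finite.of_injective f
  intro a b h
  exact Subtype.ext (iio_inj D hA hB (congrArg Subtype.val h))

lemma dim_zero : Module.finrank F2 (UU D 0) = Module.finrank F2 (invT 0) := by
  let f : UU D 0 →ₗ[F2] invT 0 :=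
    (iio.toLinearMap.restrict (fun p hp => iio_mem D hA hB 0 p hp))
  apply LinearEquiv.finrank_eq
  refine LinearEquiv.ofBijective f ⟨?_, ?_⟩
  · intro a b h
    exact Subtype.ext (iio_inj D hA hB (congrArg Subtype.val h))
  · rintro ⟨u, hu⟩
    refine ⟨⟨ppi u, ppi_mem D hA hB 0 u hu⟩, Subtype.ext ?_⟩
    change iio (ppi u) = u
    have h := totalDegree_eq_zero_iff_eq_C.1 ((totalDegree_zero_iff_isHomogeneous _).2 hu.1)
    rw [h]
    change iio (ppi (algebraMap F2 TT _)) = algebraMap F2 TT _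
    rw [AlgHom.commutes, AlgHom.commutes]

lemma dim_succ (d : ℕ) : Module.finrank F2 (invT d) + Module.finrank F2 (UU D (d + 1)) =
    Module.finrank F2 (invT (d + 1)) := by
  have := finite_UU D hA hB (d + 1)
  let f : UU D (d + 1) →ₗ[F2] invT (d + 1) :=
    (iio.toLinearMap.restrict (fun p hp => iio_mem D hA hB (d + 1) p hp))
  let h : invT d →ₗ[F2] invT (d + 1) :=
    ((LinearMap.mulLeft F2 ee).restrict (fun p hp => ee_mem D hA hB d p hp))
  rw [← Module.finrank_prod]
  apply LinearEquiv.finrank_eq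
  refine LinearEquiv.ofBijective (h.coprod f) ⟨?_, ?_⟩
  · rw [injective_iff_map_eq_zero]
    rintro ⟨⟨w, hw⟩, ⟨p, hp⟩⟩ e
    have e' : ee * w + iio p = 0 := congrArg Subtype.val e
    have e2 := congrArg ppi e'
    rw [map_add, map_mul, ppi_ee, zero_mul, zero_add, ppi_iio, map_zero] at e2
    rw [e2, map_zero, add_zero] at e'
    have e3 := (mul_eq_zero.1 e').resolve_left ee_ne
    subst e2 e3
    rfl
  · rintro ⟨u, hu⟩
    obtain ⟨w, hw⟩ := ee_dvd u
    have hpi := ppi_mem D hA hB _ u hu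
    have hio := iio_mem D hA hB _ _ hpi
    have hd := (invT (d + 1)).sub_mem hu hio
    have hw2 : u - iio (ppi u) = ee * homogeneousComponent d w := by
      rw [← comp_ee, ← hw, homogeneousComponent_eq_self hd.1]
    have hwm : homogeneousComponent d w ∈ invT d := by
      refine ⟨homogeneousComponent_isHomogeneous _ _, fun g => ?_⟩
      apply mul_left_cancel₀ ee_ne
      rw [← hw2]
      conv_lhs => rw [← ren_ee g, ← map_mul, ← hw2, hd.2 g]
    refine ⟨(⟨_, hwm⟩, ⟨_, hpi⟩), Subtype.ext ?_⟩
    change ee * homogeneousComponent d w + iio (ppi u) = u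
    rw [← hw2, sub_add_cancel]

end

noncomputable def HT : PowerSeries ℤ := PowerSeries.mk fun d => (Module.finrank F2 (invT d) : ℤ)

lemma HT_eq : HT * 168 = geo 1 ^ 7 + 21 * (geo 1 ^ 3 * geo 2 ^ 2) + 56 * (geo 1 * geo 3 ^ 2) +
    42 * (geo 1 * geo 2 * geo 4) + 48 * geo 7 := by
  have h : HT * 168 = ∑ i, (ncl i : PowerSeries ℤ) * FF i := by
    ext d
    rw [← sum_FF, ← finrank_invT]
    have : (168 : PowerSeries ℤ) = PowerSeries.C (168 : ℤ) := (map_ofNat PowerSeries.C 168).symm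
    rw [this, PowerSeries.coeff_mul_C, HT, PowerSeries.coeff_mk]
  rw [h, Fin.sum_univ_five]
  simp [ncl, FF, tab]
  ring

lemma HS_eq (D : G3 →* GL (Fin 6) F2)
    (hA : (D Agen : Matrix (Fin 6) (Fin 6) F2) = DA6)
    (hB : (D Bgen : Matrix (Fin 6) (Fin 6) F2) = DB6) :
    (PowerSeries.mk fun d : ℕ => (Module.finrank F2 (UU D d) : ℤ)) =
      HT * (1 - PowerSeries.X ^ 1) := by
  ext d
  rw [PowerSeries.coeff_mk, mul_sub, mul_one, pow_one, map_sub]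
  cases d with
  | zero => simp [HT, dim_zero D hA hB]
  | succ d =>
    rw [PowerSeries.coeff_succ_mul_X, HT, PowerSeries.coeff_mk, PowerSeries.coeff_mk,
      ← dim_succ D hA hB d]
    push_cast
    ring

lemma final_id (H a b c d e x : PowerSeries ℤ)
    (h : H * 168 = a ^ 7 + 21 * (a ^ 3 * b ^ 2) + 56 * (a * c ^ 2) + 42 * (a * b * d) + 48 * e)
    (ha : a * (1 - x ^ 1) = 1) (hb : b * (1 - x ^ 2) = 1) (hc : c * (1 - x ^ 3) = 1)
    (hd : d * (1 - x ^ 4) = 1) (he : e * (1 - x ^ 7) = 1) :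
    (H * (1 - x ^ 1)) * ((1 - x ^ 2) * (1 - x ^ 3) ^ 2 * (1 - x ^ 4) *
        (1 - x ^ 6) * (1 - x ^ 7)) =
    1 + x ^ 4 + 2 * x ^ 5 + x ^ 6 + x ^ 7 + x ^ 8 + 2 * x ^ 9 + 2 * x ^ 10 +
      x ^ 11 + x ^ 12 + x ^ 13 + 2 * x ^ 14 + x ^ 15 + x ^ 19 := by
  have h168 : (168 : PowerSeries ℤ) ≠ 0 := by
    have : (168 : PowerSeries ℤ) = PowerSeries.C (168 : ℤ) := (map_ofNat PowerSeries.C 168).symm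
    rw [this, Ne, map_eq_zero_iff _ PowerSeries.C_injective]
    norm_num
  apply mul_left_cancel₀ h168
  have p1 : a ^ 7 * (1 - x ^ 1) ^ 7 = 1 := by rw [← mul_pow, ha, one_pow]
  have p2 : a ^ 3 * b ^ 2 * ((1 - x ^ 1) ^ 3 * (1 - x ^ 2) ^ 2) = 1 := by
    rw [mul_mul_mul_comm, ← mul_pow, ← mul_pow, ha, hb, one_pow, one_pow, one_mul]
  have p3 : a * c ^ 2 * ((1 - x ^ 1) * (1 - x ^ 3) ^ 2) = 1 := by
    rw [mul_mul_mul_comm, ← mul_pow, ha, hc, one_pow, one_mul]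
  have p4 : a * b * d * ((1 - x ^ 1) * (1 - x ^ 2) * (1 - x ^ 4)) = 1 := by
    rw [mul_mul_mul_comm, mul_mul_mul_comm a b, ha, hb, hd, one_mul, one_mul]
  generalize a ^ 7 = A1 at *
  generalize a ^ 3 * b ^ 2 = A2 at *
  generalize a * c ^ 2 = A3 at *
  generalize a * b * d = A4 at *
  linear_combination ((1 - x ^ 1) * ((1 - x ^ 2) * (1 - x ^ 3) ^ 2 * (1 - x ^ 4) *
        (1 - x ^ 6) * (1 - x ^ 7))) * h
    + ((1 + x) * (1 + x + x^2)^2 * (1+x+x^2+x^3) * (1+x+x^2+x^3+x^4+x^5) *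
        (1+x+x^2+x^3+x^4+x^5+x^6)) * p1
    + 21 * ((1 + x + x^2)^2 * (1 + x^2) * (1 - x ^ 6) * (1 - x ^ 7)) * p2
    + 56 * ((1 - x ^ 2) * (1 - x ^ 4) * (1 - x ^ 6) * (1 - x ^ 7)) * p3
    + 42 * ((1 - x ^ 3) ^ 2 * (1 - x ^ 6) * (1 - x ^ 7)) * p4
    + 48 * ((1 - x) * (1 - x ^ 2) * (1 - x ^ 3) ^ 2 * (1 - x ^ 4) * (1 - x ^ 6)) * he

/-- The Hilbert series of `S[W'^*]^G` satisfies
`(Σ_d dim(S[W'^*]^G_d) t^d)·(1−t²)(1−t³)²(1−t⁴)(1−t⁶)(1−t⁷)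
  = 1 + t⁴ + 2t⁵ + t⁶ + t⁷ + t⁸ + 2t⁹ + 2t¹⁰ + t¹¹ + t¹² + t¹³ + 2t¹⁴ + t¹⁵ + t¹⁹`
as an identity of formal power series in `ℤ[[t]]`. -/
theorem stmt11 (D : G3 →* GL (Fin 6) F2)
    (hA : (D Agen : Matrix (Fin 6) (Fin 6) F2) = DA6)
    (hB : (D Bgen : Matrix (Fin 6) (Fin 6) F2) = DB6) :
    (PowerSeries.mk fun d : ℕ =>
        (Module.finrank F2
          ((invG D).toSubmodule ⊓ homogeneousSubmodule (Fin 6) F2 d :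
            Submodule F2 (MvPolynomial (Fin 6) F2)) : ℤ)) *
      ((1 - PowerSeries.X ^ 2) * (1 - PowerSeries.X ^ 3) ^ 2 * (1 - PowerSeries.X ^ 4) *
        (1 - PowerSeries.X ^ 6) * (1 - PowerSeries.X ^ 7)) =
    1 + PowerSeries.X ^ 4 + 2 * PowerSeries.X ^ 5 + PowerSeries.X ^ 6 + PowerSeries.X ^ 7 +
      PowerSeries.X ^ 8 + 2 * PowerSeries.X ^ 9 + 2 * PowerSeries.X ^ 10 +
      PowerSeries.X ^ 11 + PowerSeries.X ^ 12 + PowerSeries.X ^ 13 +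
      2 * PowerSeries.X ^ 14 + PowerSeries.X ^ 15 + PowerSeries.X ^ 19 := by
  have h := HS_eq D hA hB
  unfold UU at h
  rw [h]
  exact final_id HT (geo 1) (geo 2) (geo 3) (geo 4) (geo 7) PowerSeries.X HT_eq
    (geo_mul 1 (by norm_num)) (geo_mul 2 (by norm_num)) (geo_mul 3 (by norm_num))
    (geo_mul 4 (by norm_num)) (geo_mul 7 (by norm_num))
end
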